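/- arXiv:1303.3122 — 13 statements merged into one kernel-verified Lean document; each statement's English description precedes it below -/
import Mathlib

section
/- Let α ∈ (-1, 1) and define h_α(t) = (1 + 1/t)^α for t > 0. Then for every integer m ≥ 1 and every t > 0, the m-th derivative of h_α satisfies h_α^(m)(t) = ((-1)^m / (t^m (1+t)^m)) · (1 + 1/t)^α · Σ_{k=0}^{m-1} a_{α,m,k} t^k, where a_{α,m,k} = k! · C(m,k) · C(m-1,k) · Π_{ℓ=0}^{m-k-1} (α + ℓ), and C(n,k) denotes the binomial coefficient. -/
open Real Finset

noncomputable def acoef (α : ℝ) (m k : ℕ) : ℝ :=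
  (k.factorial : ℝ) * (m.choose k : ℝ) * ((m - 1).choose k : ℝ) *
            ∏ ℓ ∈ Finset.range (m - k), (α + ℓ)

lemma acoef_rec (α : ℝ) (n j : ℕ) (hj : j < n + 1) :
    acoef α (n + 2) (j + 1) = (α + (n + 1) - (j + 1)) * acoef α (n + 1) (j + 1)
      + (2 * (n + 1) - j) * acoef α (n + 1) j := by
  obtain ⟨d, rfl⟩ : ∃ d, n = j + d := ⟨n - j, by omega⟩
  unfold acoef
  have e1 : j + d + 2 - (j + 1) = d + 1 := by omega
  have e2 : j + d + 1 - (j + 1) = d := by omega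
  have e3 : j + d + 1 - j = d + 1 := by omega
  have e4 : j + d + 2 - 1 = j + d + 1 := by omega
  have e5 : j + d + 1 - 1 = j + d := by omega
  rw [e1, e2, e3, e4, e5, Finset.prod_range_succ, Nat.factorial_succ]
  have h1 : (((j+d+2).choose (j+1) : ℕ) : ℝ) = (j+d+1).choose j + (j+d+1).choose (j+1) := by
    exact_mod_cast Nat.choose_succ_succ (j+d+1) j
  have h2 : (((j+d+1).choose (j+1) : ℕ) : ℝ) = (j+d).choose j + (j+d).choose (j+1) := by
    exact_mod_cast Nat.choose_succ_succ (j+d) j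
  have h3 : ((j + d + 1 : ℝ)) * (j+d).choose j = (j+d+1).choose (j+1) * (j+1) := by
    exact_mod_cast Nat.add_one_mul_choose_eq (j+d) j
  have h4 : ((j+d).choose j : ℝ) * (j + d + 1) = (j+d+1).choose j * (d+1) := by
    have := Nat.choose_mul_succ_eq (j+d) j
    rw [e3] at this
    exact_mod_cast this
  generalize (∏ ℓ ∈ Finset.range d, (α + (ℓ:ℝ))) = P
  generalize (((j+d+2).choose (j+1) : ℕ) : ℝ) = Z at *
  generalize (((j+d+1).choose (j+1) : ℕ) : ℝ) = Y at *
  generalize (((j+d+1).choose j : ℕ) : ℝ) = X at *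
  generalize (((j+d).choose j : ℕ) : ℝ) = A at *
  generalize (((j+d).choose (j+1) : ℕ) : ℝ) = B at *
  have key : (j + 1 : ℝ) * Z * Y = (j+1) * Y * B + (2 * (j + d + 1) - j) * X * A := by
    subst h1
    have : Y * (j+1) * (X + Y - B) = (j+d+1) * A * (X + Y - B) := by rw [h3]
    have h5 : Y - B = A := by linarith
    linear_combination this + (j+d+1) * A * h5 + A * h4
  push_cast
  linear_combination (j.factorial : ℝ) * P * (α + d) * key

lemma acoef_top (α : ℝ) (n : ℕ) : acoef α (n + 1) (n + 1) = 0 := by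
  simp [acoef]

lemma acoef_zero (α : ℝ) (n : ℕ) :
    acoef α (n + 2) 0 = (α + (n + 1)) * acoef α (n + 1) 0 := by
  simp [acoef, Finset.prod_range_succ]; ring

lemma sum_rec (α t : ℝ) (n : ℕ) :
    ∑ k ∈ Finset.range (n + 2), acoef α (n + 2) k * t ^ k =
      (α + (n + 1) * (1 + 2 * t)) * ∑ k ∈ Finset.range (n + 1), acoef α (n + 1) k * t ^ k
      - (t * (1 + t)) * ∑ k ∈ Finset.range (n + 1), acoef α (n + 1) k * (k * t ^ (k - 1)) := by
  have hd : t * ∑ k ∈ Finset.range (n + 1), acoef α (n + 1) k * (k * t ^ (k - 1))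
      = ∑ k ∈ Finset.range (n + 1), acoef α (n + 1) k * (k * t ^ k) := by
    rw [Finset.mul_sum]
    refine Finset.sum_congr rfl fun k _ => ?_
    rcases k with _ | k
    · simp
    · simp [pow_succ]; ring
  have h1 : ∑ k ∈ Finset.range (n + 1), (α + (n + 1) - k) * acoef α (n + 1) k * t ^ k
      = ∑ k ∈ Finset.range (n + 1), (α + (n + 1) - (k + 1)) * acoef α (n + 1) (k + 1) * t ^ (k + 1)
        + (α + (n + 1)) * acoef α (n + 1) 0 := by
    have := Finset.sum_range_succ (fun k : ℕ => (α + (n + 1) - k) * acoef α (n + 1) k * t ^ k) (n+1)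
    rw [Finset.sum_range_succ', acoef_top] at this
    simp at this
    linarith
  have h2 : (α + (n + 1) * (1 + 2 * t)) * ∑ k ∈ Finset.range (n + 1), acoef α (n + 1) k * t ^ k
      - (t * (1 + t)) * ∑ k ∈ Finset.range (n + 1), acoef α (n + 1) k * (k * t ^ (k - 1))
      = ∑ k ∈ Finset.range (n + 1), (α + (n + 1) - k) * acoef α (n + 1) k * t ^ k
       + ∑ k ∈ Finset.range (n + 1), (2 * (n + 1) - k) * acoef α (n + 1) k * t ^ (k + 1) := by
    rw [mul_comm t, mul_assoc, hd, Finset.mul_sum, Finset.mul_sum, ← Finset.sum_sub_distrib,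
      ← Finset.sum_add_distrib]
    refine Finset.sum_congr rfl fun k _ => ?_
    ring
  rw [h2, h1, Finset.sum_range_succ', acoef_zero, pow_zero, mul_one, add_right_comm,
    ← Finset.sum_add_distrib]
  congr 1
  refine Finset.sum_congr rfl fun k hk => ?_
  rw [acoef_rec α n k (Finset.mem_range.1 hk)]
  ring

lemma deriv_h (α t : ℝ) (ht : 0 < t) :
    HasDerivAt (fun s : ℝ => (1 + 1 / s) ^ α) (-α / (t * (1 + t)) * (1 + 1 / t) ^ α) t := by
  have hpos : 0 < 1 + 1 / t := by positivity
  have h0 : HasDerivAt (fun s : ℝ => 1 + 1 / s) (-(t ^ 2)⁻¹) t := by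
    simpa using (hasDerivAt_inv ht.ne').const_add 1
  have := h0.rpow_const (p := α) (Or.inl hpos.ne')
  convert this using 1
  rw [Real.rpow_sub_one hpos.ne']
  have : t + 1 ≠ 0 := by positivity
  have : 1 + t ≠ 0 := by positivity
  field_simp
  ring

lemma main_aux (α : ℝ) (n : ℕ) : ∀ t : ℝ, 0 < t →
    iteratedDeriv (n + 1) (fun s : ℝ => (1 + 1 / s) ^ α) t =
      (-1 : ℝ) ^ (n + 1) / (t ^ (n + 1) * (1 + t) ^ (n + 1)) * (1 + 1 / t) ^ α *
        ∑ k ∈ Finset.range (n + 1), acoef α (n + 1) k * t ^ k := by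
  induction n with
  | zero =>
    intro t ht
    rw [zero_add, iteratedDeriv_one, (deriv_h α t ht).deriv]
    simp [acoef]
    ring
  | succ n ih =>
    intro t ht
    rw [iteratedDeriv_succ]
    have hev : iteratedDeriv (n + 1) (fun s : ℝ => (1 + 1 / s) ^ α) =ᶠ[nhds t]
        fun t => (-1 : ℝ) ^ (n + 1) / ((t * (1 + t)) ^ (n + 1)) * (1 + 1 / t) ^ α *
        ∑ k ∈ Finset.range (n + 1), acoef α (n + 1) k * t ^ k := by
      filter_upwards [lt_mem_nhds ht] with s hs
      rw [ih s hs, mul_pow]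
    rw [hev.deriv_eq, sum_rec α t n, ← mul_pow]
    have hq : t * (1 + t) ≠ 0 := by positivity
    have hsum : HasDerivAt (fun t : ℝ => ∑ k ∈ Finset.range (n + 1), acoef α (n + 1) k * t ^ k)
        (∑ k ∈ Finset.range (n + 1), acoef α (n + 1) k * (k * t ^ (k - 1))) t :=
      HasDerivAt.fun_sum fun k _ => (hasDerivAt_pow k t).const_mul _
    have hq' : HasDerivAt (fun t : ℝ => t * (1 + t)) (1 + 2 * t) t := by
      have := (hasDerivAt_id' t).fun_mul ((hasDerivAt_id' t).const_add 1)
      exact this.congr_deriv (by ring)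
    have hpw := (hasDerivAt_const t ((-1 : ℝ) ^ (n + 1))).fun_div (hq'.fun_pow (n + 1))
      (pow_ne_zero _ hq)
    have := (hpw.fun_mul (deriv_h α t ht)).fun_mul hsum
    rw [this.deriv]
    generalize (∑ k ∈ Finset.range (n + 1), acoef α (n + 1) k * (k * t ^ (k - 1))) = S'
    generalize (∑ k ∈ Finset.range (n + 1), acoef α (n + 1) k * t ^ k) = S
    generalize (1 + 1 / t) ^ α = H
    generalize t * (1 + t) = q at *
    simp only [Nat.add_sub_cancel, Nat.cast_add, Nat.cast_one, zero_mul, zero_sub]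
    field_simp
    ring

theorem h_alpha_iterated_deriv_formula
    (α : ℝ) (hα : α ∈ Set.Ioo (-1 : ℝ) 1)
    (m : ℕ) (hm : 1 ≤ m) (t : ℝ) (ht : 0 < t) :
    iteratedDeriv m (fun s : ℝ => (1 + 1 / s) ^ α) t =
      (-1 : ℝ) ^ m / (t ^ m * (1 + t) ^ m) * (1 + 1 / t) ^ α *
        ∑ k ∈ Finset.range m,
          ((k.factorial : ℝ) * (m.choose k : ℝ) * ((m - 1).choose k : ℝ) *
            ∏ ℓ ∈ Finset.range (m - k), (α + ℓ)) * t ^ k := by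
  obtain ⟨n, rfl⟩ : ∃ n, m = n + 1 := ⟨m - 1, by omega⟩
  exact main_aux α n t ht
end

section
/- For α ∈ (0, 1), the function h_α(t) = (1 + 1/t)^α is completely monotonic on (0, ∞), i.e., h_α has derivatives of all orders on (0,∞) and (-1)^n h_α^(n)(t) ≥ 0 for all t > 0 and all integers n ≥ 0. -/
open Real

noncomputable def hFam (α : ℝ) (i j : ℕ) (s : ℝ) : ℝ :=
  (1 + 1 / s) ^ α * ((s⁻¹) ^ i * ((s + 1)⁻¹) ^ j)

lemma hFam_contDiffAt (α : ℝ) (i j : ℕ) (t : ℝ) (ht : 0 < t) (n : WithTop ℕ∞) :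
    ContDiffAt ℝ n (hFam α i j) t := by
  have h1 : t ≠ 0 := ht.ne'
  have h2 : t + 1 ≠ 0 := by positivity
  have h3 : 1 + 1 / t ≠ 0 := by positivity
  unfold hFam
  refine ContDiffAt.mul ?_ (ContDiffAt.mul ?_ ?_)
  · exact ContDiffAt.rpow_const_of_ne
      (contDiffAt_const.add (contDiffAt_const.div contDiffAt_id h1)) h3
  · exact (contDiffAt_id.inv h1).pow i
  · exact ((contDiffAt_id.add contDiffAt_const).inv h2).pow j

lemma hFam_deriv (α : ℝ) (i j : ℕ) (t : ℝ) (ht : 0 < t) :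
    deriv (hFam α i j) t = (-α) * hFam α (i+1) (j+1) t + ((-(i:ℝ)) * hFam α (i+1) j t
      + (-(j:ℝ)) * hFam α i (j+1) t) := by
  have h1 : t ≠ 0 := ht.ne'
  have h2 : t + 1 ≠ 0 := by positivity
  have h3 : 1 + 1 / t ≠ 0 := by positivity
  have d0 : HasDerivAt (fun s : ℝ => 1 + 1 / s) (-(t^2)⁻¹) t := by
    simpa using (hasDerivAt_inv h1).const_add 1
  have d1 := d0.rpow_const (p := α) (Or.inl h3)
  have d2 := (hasDerivAt_inv h1).pow i
  have d3 := (((hasDerivAt_id t).add_const 1).inv h2).pow j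
  have d := d1.mul (d2.mul d3)
  have e : deriv (hFam α i j) t = _ := d.deriv
  rw [e]
  have hr : (1 + 1 / t) ^ (α - 1) = (1 + 1 / t) ^ α * (t * (t+1)⁻¹) := by
    rw [Real.rpow_sub_one h3]
    field_simp
  have ei : (i:ℝ) * (t⁻¹)^(i-1) * (-(t^2)⁻¹) = -(i:ℝ) * (t⁻¹)^(i+1) := by
    cases i with
    | zero => simp
    | succ k => simp only [Nat.add_sub_cancel]; ring
  have ej : (j:ℝ) * ((t+1)⁻¹)^(j-1) * (-1/(t+1)^2) = -(j:ℝ) * ((t+1)⁻¹)^(j+1) := by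
    cases j with
    | zero => simp
    | succ k => simp only [Nat.add_sub_cancel]; generalize t + 1 = B; ring
  simp only [Pi.mul_apply, Pi.pow_apply, Pi.inv_apply, id, hFam]
  rw [hr, ei, ej]
  have : (t^2)⁻¹ * t = t⁻¹ := by field_simp
  generalize (1 + 1 / t) ^ α = A
  generalize (t + 1)⁻¹ = B
  linear_combination (-α * A * B * (t⁻¹) ^ i * B ^ j) * this

lemma hFam_cm (α : ℝ) (hα : 0 ≤ α) (n : ℕ) : ∀ (i j : ℕ) (t : ℝ), 0 < t →
    0 ≤ (-1 : ℝ) ^ n * iteratedDeriv n (hFam α i j) t := by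
  induction n with
  | zero =>
    intro i j t ht
    simp only [pow_zero, one_mul, iteratedDeriv_zero, hFam]
    positivity
  | succ n ih =>
    intro i j t ht
    have he : deriv (hFam α i j) =ᶠ[nhds t] ((fun s => (-α) * hFam α (i+1) (j+1) s) +
        ((fun s => (-(i:ℝ)) * hFam α (i+1) j s) + (fun s => (-(j:ℝ)) * hFam α i (j+1) s))) := by
      filter_upwards [lt_mem_nhds ht] with s hs
      exact hFam_deriv α i j s hs
    have c : ∀ (c : ℝ) (i j : ℕ), ContDiffAt ℝ n (fun s => c * hFam α i j s) t :=
      fun c i j => contDiffAt_const.mul (hFam_contDiffAt α i j t ht n)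
    have c2 : ∀ (c d : ℝ) (i j k l : ℕ), ContDiffAt ℝ n
        ((fun s => c * hFam α i j s) + (fun s => d * hFam α k l s)) t :=
      fun a b i j k l => (c a i j).add (c b k l)
    rw [iteratedDeriv_succ', he.iteratedDeriv_eq,
      iteratedDeriv_add (c _ _ _) (c2 _ _ _ _ _ _),
      iteratedDeriv_add (c _ _ _) (c _ _ _)]
    simp only [iteratedDeriv_const_mul_field]
    have a1 := mul_nonneg hα (ih (i+1) (j+1) t ht)
    have a2 := mul_nonneg (Nat.cast_nonneg (α := ℝ) i) (ih (i+1) j t ht)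
    have a3 := mul_nonneg (Nat.cast_nonneg (α := ℝ) j) (ih i (j+1) t ht)
    rw [pow_succ]
    linarith

theorem h_alpha_completely_monotonic
    (α : ℝ) (hα : α ∈ Set.Ioo (0 : ℝ) 1) :
    ContDiffOn ℝ (⊤ : ℕ∞) (fun s : ℝ => (1 + 1 / s) ^ α) (Set.Ioi 0) ∧
      ∀ n : ℕ, ∀ t : ℝ, 0 < t →
        0 ≤ (-1 : ℝ) ^ n * iteratedDeriv n (fun s : ℝ => (1 + 1 / s) ^ α) t := by
  have e : (fun s : ℝ => (1 + 1 / s) ^ α) = hFam α 0 0 := by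
    funext s
    simp [hFam]
  rw [e]
  exact ⟨fun t ht => (hFam_contDiffAt α 0 0 t ht _).contDiffWithinAt,
    fun n t ht => hFam_cm α hα.1.le n 0 0 t ht⟩
end

section
/- For α ∈ (-1, 0), the function h_α(t) = (1 + 1/t)^α is a Bernstein function on (0, ∞), i.e., h_α is nonnegative on (0,∞), has derivatives of all orders, and its first derivative h_α′ is completely monotonic on (0, ∞). -/
open Real

lemma aux_cd (p q t : ℝ) (n : ℕ∞) (ht : 0 < t) :
    ContDiffAt ℝ n (fun s : ℝ => s ^ p * (1 + s) ^ q) t := by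
  apply ContDiffAt.mul
  · exact contDiffAt_id.rpow_const_of_ne ht.ne'
  · exact (contDiffAt_const.add contDiffAt_id).rpow_const_of_ne (by simp only [id]; positivity)

lemma aux_deriv (p q t : ℝ) (ht : 0 < t) :
    deriv (fun s : ℝ => s ^ p * (1 + s) ^ q) t =
      p * (t ^ (p - 1) * (1 + t) ^ q) + q * (t ^ p * (1 + t) ^ (q - 1)) := by
  have h1 : HasDerivAt (fun s : ℝ => s ^ p) (p * t ^ (p - 1)) t :=
    Real.hasDerivAt_rpow_const (Or.inl ht.ne')
  have h2 : HasDerivAt (fun s : ℝ => (1 + s) ^ q) (1 * q * (1 + t) ^ (q - 1)) t :=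
    ((hasDerivAt_id t).const_add 1).rpow_const (Or.inl (by simp only [id]; positivity))
  have := (h1.mul h2).deriv
  refine Eq.trans this ?_
  ring

lemma aux_cm (n : ℕ) : ∀ p q : ℝ, p ≤ 0 → q ≤ 0 → ∀ t : ℝ, 0 < t →
    0 ≤ (-1 : ℝ) ^ n * iteratedDeriv n (fun s : ℝ => s ^ p * (1 + s) ^ q) t := by
  induction n with
  | zero => intro p q _ _ t ht; simp; positivity
  | succ n ih =>
    intro p q hp hq t ht
    have he : deriv (fun s : ℝ => s ^ p * (1 + s) ^ q) =ᶠ[nhds t]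
        ((fun s => p * (s ^ (p - 1) * (1 + s) ^ q)) +
          fun s => q * (s ^ p * (1 + s) ^ (q - 1))) := by
      filter_upwards [lt_mem_nhds ht] with s hs
      exact aux_deriv p q s hs
    have c1 := aux_cd (p - 1) q t n ht
    have c2 := aux_cd p (q - 1) t n ht
    rw [iteratedDeriv_succ', he.iteratedDeriv_eq,
      iteratedDeriv_add (contDiffAt_const.mul c1) (contDiffAt_const.mul c2),
      iteratedDeriv_const_mul_field, iteratedDeriv_const_mul_field]
    have a := mul_nonneg (neg_nonneg.2 hp) (ih (p - 1) q (by linarith) hq t ht)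
    have b := mul_nonneg (neg_nonneg.2 hq) (ih p (q - 1) hp (by linarith) t ht)
    refine (add_nonneg a b).trans_eq ?_
    ring

theorem h_alpha_bernstein
    (α : ℝ) (hα : α ∈ Set.Ioo (-1 : ℝ) 0) :
    (∀ t : ℝ, 0 < t → 0 ≤ (1 + 1 / t) ^ α) ∧
      ContDiffOn ℝ (⊤ : ℕ∞) (fun s : ℝ => (1 + 1 / s) ^ α) (Set.Ioi 0) ∧
      ∀ n : ℕ, ∀ t : ℝ, 0 < t →
        0 ≤ (-1 : ℝ) ^ n *
          iteratedDeriv n (deriv (fun s : ℝ => (1 + 1 / s) ^ α)) t := by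
  obtain ⟨h1, h2⟩ := hα
  have key : ∀ s : ℝ, 0 < s → (1 + 1 / s) ^ α = s ^ (-α) * (1 + s) ^ α := by
    intro s hs
    rw [show 1 + 1 / s = (1 + s) / s by field_simp; ring,
      Real.div_rpow (by positivity) hs.le, Real.rpow_neg hs.le]
    ring
  refine ⟨fun t ht => by positivity, ?_, ?_⟩
  · have : ContDiffOn ℝ (⊤ : ℕ∞) (fun s : ℝ => s ^ (-α) * (1 + s) ^ α) (Set.Ioi 0) :=
      fun s hs => (aux_cd (-α) α s ⊤ hs).contDiffWithinAt
    exact this.congr fun s hs => key s hs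
  · intro n t ht
    have he : deriv (fun s : ℝ => (1 + 1 / s) ^ α) =ᶠ[nhds t]
        fun s => (-α) * (s ^ (-α - 1) * (1 + s) ^ (α - 1)) := by
      filter_upwards [lt_mem_nhds ht] with s hs
      have e : (fun s : ℝ => (1 + 1 / s) ^ α) =ᶠ[nhds s]
          fun s => s ^ (-α) * (1 + s) ^ α := by
        filter_upwards [lt_mem_nhds hs] with u hu
        exact key u hu
      rw [e.deriv_eq, aux_deriv _ _ _ hs]
      have e1 : (1 + s) ^ α = (1 + s) ^ (α - 1) * (1 + s) := by
        rw [← Real.rpow_add_one (by positivity)]; ring_nf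
      have e2 : s ^ (-α) = s ^ (-α - 1) * s := by
        rw [← Real.rpow_add_one hs.ne']; ring_nf
      rw [e1, e2]
      ring
    rw [he.iteratedDeriv_eq, iteratedDeriv_const_mul_field]
    have := mul_nonneg (neg_nonneg.2 h2.le)
      (aux_cm n (-α - 1) (α - 1) (by linarith) (by linarith) t ht)
    refine this.trans_eq ?_
    ring
end

section
/- For α ∈ (-1, 1) and every real t > 0, the function h_α(t) = (1 + 1/t)^α has the integral representation h_α(t) = 1 + (sin(απ)/π) · ∫₀¹ (1/u − 1)^α / (u + t) du. -/
open Real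

open MeasureTheory in
lemma aux_beta (α : ℝ) (h1 : -1 < α) (h2 : α < 0) :
    IntegrableOn (fun u : ℝ => (1 / u - 1) ^ α / u) (Set.Ioo 0 1) ∧
    ∫ u in Set.Ioo (0:ℝ) 1, (1 / u - 1) ^ α / u = - π / Real.sin (π * α) := by
  have hs : 0 < Complex.re ((-α : ℝ) : ℂ) := by simpa using h2
  have ht : 0 < Complex.re ((1 + α : ℝ) : ℂ) := by rw [Complex.ofReal_re]; linarith
  have hc := Complex.betaIntegral_convergent hs ht
  have hG := Complex.Gamma_mul_Gamma_eq_betaIntegral hs ht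
  rw [intervalIntegrable_iff_integrableOn_Ioo_of_le zero_le_one] at hc
  rw [Complex.betaIntegral, intervalIntegral.integral_of_le zero_le_one,
    integral_Ioc_eq_integral_Ioo] at hG
  have heq : Set.EqOn (fun x : ℝ => (x : ℂ) ^ (((-α : ℝ) : ℂ) - 1) *
      (1 - (x : ℂ)) ^ (((1 + α : ℝ) : ℂ) - 1))
      (fun u : ℝ => (((1 / u - 1) ^ α / u : ℝ) : ℂ)) (Set.Ioo 0 1) := by
    intro x hx
    have hx0 : 0 < x := hx.1
    have hx1 : 0 < 1 - x := by linarith [hx.2]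
    have e : (1 / x - 1) ^ α / x = x ^ (-α - 1) * (1 - x) ^ (1 + α - 1) := by
      have : 1 / x - 1 = (1 - x) / x := by field_simp
      rw [this, Real.div_rpow hx1.le hx0.le, Real.rpow_sub hx0, Real.rpow_neg hx0.le,
        Real.rpow_one, add_sub_cancel_left]
      field_simp
    simp only [e]
    push_cast
    rw [Complex.ofReal_cpow hx0.le, Complex.ofReal_cpow hx1.le]
    push_cast
    rfl
  rw [integrableOn_congr_fun heq measurableSet_Ioo] at hc
  rw [setIntegral_congr_fun measurableSet_Ioo heq, integral_complex_ofReal] at hG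
  refine ⟨by simpa [IntegrableOn] using MeasureTheory.Integrable.re hc, ?_⟩
  have h3 := Real.Gamma_mul_Gamma_one_sub (-α)
  rw [← Complex.ofReal_add, Complex.Gamma_ofReal, Complex.Gamma_ofReal, Complex.Gamma_ofReal,
    ← Complex.ofReal_mul, ← Complex.ofReal_mul, Complex.ofReal_inj] at hG
  have e1 : -α + (1 + α) = 1 := by ring
  rw [e1, Real.Gamma_one, one_mul] at hG
  rw [← hG]
  have e2 : 1 - -α = 1 + α := by ring
  rw [e2] at h3
  rw [h3, mul_neg, Real.sin_neg, div_neg, neg_div]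

lemma aux_image (t : ℝ) (ht : 0 < t) :
    (fun u : ℝ => u * (1 + t) / (u + t)) '' Set.Ioo 0 1 = Set.Ioo 0 1 := by
  ext v
  constructor
  · rintro ⟨u, ⟨h0, h1⟩, rfl⟩
    have : 0 < u + t := by linarith
    refine ⟨by positivity, ?_⟩
    simp only
    rw [div_lt_one this]
    nlinarith
  · rintro ⟨h0, h1⟩
    have : 0 < 1 + t - v := by linarith
    refine ⟨t * v / (1 + t - v), ⟨by positivity, ?_⟩, ?_⟩
    · rw [div_lt_one this]; nlinarith
    · have h2 : t * v / (1 + t - v) + t = t * (1 + t) / (1 + t - v) := by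
        field_simp; ring
      simp only
      rw [h2]
      field_simp

lemma aux_deriv_s5 (t : ℝ) (ht : 0 < t) : ∀ u ∈ Set.Ioo (0:ℝ) 1,
    HasDerivWithinAt (fun u : ℝ => u * (1 + t) / (u + t)) (t * (1 + t) / (u + t) ^ 2)
      (Set.Ioo 0 1) u := by
  intro u hu
  have : u + t ≠ 0 := by linarith [hu.1]
  have h := ((hasDerivAt_id u).mul_const (1 + t)).div ((hasDerivAt_id u).add_const t) this
  refine (h.congr_deriv ?_).hasDerivWithinAt
  simp only [id]
  ring

lemma aux_inj (t : ℝ) (ht : 0 < t) :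
    Set.InjOn (fun u : ℝ => u * (1 + t) / (u + t)) (Set.Ioo 0 1) := by
  intro u hu v hv h
  have h1 : 0 < u + t := by linarith [hu.1]
  have h2 : 0 < v + t := by linarith [hv.1]
  simp only at h
  rw [div_eq_div_iff h1.ne' h2.ne'] at h
  have : (t * (1 + t)) * (u - v) = 0 := by linarith
  have h3 : t * (1 + t) ≠ 0 := by positivity
  have := (mul_eq_zero.1 this).resolve_left h3
  linarith

lemma aux_pow (α t u : ℝ) (ht : 0 < t) (hu : u ∈ Set.Ioo (0:ℝ) 1) :
    (1 / (u * (1 + t) / (u + t)) - 1) ^ α = ((1 + 1 / t) ^ α)⁻¹ * (1 / u - 1) ^ α := by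
  obtain ⟨h0, h1⟩ := hu
  have h2 : 0 < u + t := by linarith
  have h3 : 0 < 1 / u - 1 := by rw [sub_pos, lt_div_iff₀ h0]; linarith
  have h4 : 0 < 1 + 1 / t := by positivity
  have : 1 / (u * (1 + t) / (u + t)) - 1 = (1 + 1 / t)⁻¹ * (1 / u - 1) := by
    field_simp; ring
  rw [this, Real.mul_rpow (by positivity) h3.le, Real.inv_rpow h4.le]

open MeasureTheory in
lemma aux_neg (α t : ℝ) (h1 : -1 < α) (h2 : α < 0) (ht : 0 < t) :
    ∫ u in Set.Ioo (0:ℝ) 1, (1 / u - 1) ^ α / (u + t) =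
      π / Real.sin (π * α) * ((1 + 1 / t) ^ α - 1) := by
  obtain ⟨hi, hv⟩ := aux_beta α h1 h2
  have hc : 0 < (1 + 1 / t) ^ α := by positivity
  have heq : Set.EqOn (fun u : ℝ => |t * (1 + t) / (u + t) ^ 2| •
      ((1 / (u * (1 + t) / (u + t)) - 1) ^ α / (u * (1 + t) / (u + t))))
      (fun u => ((1 + 1 / t) ^ α)⁻¹ * ((1 / u - 1) ^ α / u - (1 / u - 1) ^ α / (u + t)))
      (Set.Ioo 0 1) := by
    intro u hu
    have h3 : 0 < u + t := by linarith [hu.1]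
    have h0 := hu.1
    simp only
    rw [aux_pow α t u ht hu, abs_of_pos (by positivity), smul_eq_mul]
    generalize ((1 + 1 / t) ^ α)⁻¹ = c
    generalize (1 / u - 1) ^ α = w
    field_simp
    ring
  have A := integral_image_eq_integral_abs_deriv_smul measurableSet_Ioo (aux_deriv_s5 t ht)
    (aux_inj t ht) (fun u : ℝ => (1 / u - 1) ^ α / u)
  have B := integrableOn_image_iff_integrableOn_abs_deriv_smul measurableSet_Ioo (aux_deriv_s5 t ht)
    (aux_inj t ht) (fun u : ℝ => (1 / u - 1) ^ α / u)
  rw [aux_image t ht] at A B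
  have B := B.1 hi
  rw [integrableOn_congr_fun heq measurableSet_Ioo] at B
  rw [setIntegral_congr_fun measurableSet_Ioo heq, integral_const_mul, hv] at A
  have B1 : IntegrableOn (fun u : ℝ => (1 / u - 1) ^ α / u - (1 / u - 1) ^ α / (u + t))
      (Set.Ioo 0 1) := by
    have := B.const_mul ((1 + 1 / t) ^ α)
    simpa only [IntegrableOn, mul_inv_cancel_left₀ hc.ne'] using this
  have C : IntegrableOn (fun u : ℝ => (1 / u - 1) ^ α / (u + t)) (Set.Ioo 0 1) := by
    have := hi.sub B1
    refine this.congr_fun (fun u _ => ?_) measurableSet_Ioo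
    simp
  rw [integral_sub hi C, hv] at A
  have A' := congrArg (fun x => (1 + 1 / t) ^ α * x) A
  simp only [mul_inv_cancel_left₀ hc.ne'] at A'
  rw [neg_div] at A'
  linarith

open MeasureTheory in
lemma aux_refl (α t : ℝ) (ht : 0 < t) :
    ∫ u in Set.Ioo (0:ℝ) 1, (1 / u - 1) ^ α / (u + t) =
      (1 + 1 / t) ^ α * ∫ u in Set.Ioo (0:ℝ) 1, (1 / u - 1) ^ (-α) / (u + t) := by
  have hc : 0 < (1 + 1 / t) ^ α := by positivity
  have heq : Set.EqOn (fun u : ℝ => |t * (1 + t) / (u + t) ^ 2| •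
      ((1 / (u * (1 + t) / (u + t)) - 1) ^ α / (1 + t - (u * (1 + t) / (u + t)))))
      (fun u => ((1 + 1 / t) ^ α)⁻¹ * ((1 / u - 1) ^ α / (u + t)))
      (Set.Ioo 0 1) := by
    intro u hu
    have h3 : 0 < u + t := by linarith [hu.1]
    have h0 := hu.1
    simp only
    have e : 1 + t - (u * (1 + t) / (u + t)) = t * (1 + t) / (u + t) := by
      field_simp; ring
    rw [aux_pow α t u ht hu, abs_of_pos (by positivity), smul_eq_mul, e]
    generalize ((1 + 1 / t) ^ α)⁻¹ = c
    generalize (1 / u - 1) ^ α = w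
    field_simp
  have A := integral_image_eq_integral_abs_deriv_smul measurableSet_Ioo (aux_deriv_s5 t ht)
    (aux_inj t ht) (fun u : ℝ => (1 / u - 1) ^ α / (1 + t - u))
  rw [aux_image t ht, setIntegral_congr_fun measurableSet_Ioo heq, integral_const_mul] at A
  have D : ∫ u in Set.Ioo (0:ℝ) 1, (1 / u - 1) ^ α / (1 + t - u) =
      ∫ u in Set.Ioo (0:ℝ) 1, (1 / u - 1) ^ (-α) / (u + t) := by
    have h := intervalIntegral.integral_comp_sub_left (a := 0) (b := 1)
      (fun u : ℝ => (1 / u - 1) ^ α / (1 + t - u)) 1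
    rw [sub_self, sub_zero, intervalIntegral.integral_of_le zero_le_one,
      intervalIntegral.integral_of_le zero_le_one,
      integral_Ioc_eq_integral_Ioo, integral_Ioc_eq_integral_Ioo] at h
    rw [← h]
    refine setIntegral_congr_fun measurableSet_Ioo (fun u hu => ?_)
    have h0 : 0 < u := hu.1
    have h1 : 0 < 1 - u := by linarith [hu.2]
    have h3 : 0 < 1 / u - 1 := by rw [sub_pos, lt_div_iff₀ h0]; linarith
    have e : 1 / (1 - u) - 1 = (1 / u - 1)⁻¹ := by
      have : 1 / u - 1 = (1 - u) / u := by field_simp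
      rw [this]; field_simp; ring
    have e2 : 1 + t - (1 - u) = u + t := by ring
    rw [e, e2, Real.inv_rpow h3.le, Real.rpow_neg h3.le]
  rw [← D, A, mul_inv_cancel_left₀ hc.ne']

theorem h_alpha_integral_representation_real
    (α : ℝ) (hα : α ∈ Set.Ioo (-1 : ℝ) 1) (t : ℝ) (ht : 0 < t) :
    (1 + 1 / t) ^ α =
      1 + Real.sin (α * π) / π *
        ∫ u in (0 : ℝ)..1, (1 / u - 1) ^ α / (u + t) := by
  obtain ⟨h1, h2⟩ := hα
  rw [intervalIntegral.integral_of_le zero_le_one, MeasureTheory.integral_Ioc_eq_integral_Ioo,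
    mul_comm α π]
  have hpi := Real.pi_pos
  rcases lt_trichotomy α 0 with h | h | h
  · have hs : Real.sin (π * α) ≠ 0 := by
      apply ne_of_lt
      apply Real.sin_neg_of_neg_of_neg_pi_lt <;> nlinarith
    rw [aux_neg α t h1 h ht]
    field_simp
    ring
  · simp [h]
  · have hs : Real.sin (π * α) ≠ 0 := by
      apply ne_of_gt
      apply Real.sin_pos_of_pos_of_lt_pi <;> nlinarith
    have hc : 0 < (1 + 1 / t) ^ α := by positivity
    rw [aux_refl α t ht, aux_neg (-α) t (by linarith) (by linarith) ht,
      Real.rpow_neg (by positivity), mul_neg, Real.sin_neg]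
    generalize (1 + 1 / t) ^ α = c at *
    field_simp
    ring
end

section
/- Let α ∈ (-1, 1) and let z ∈ ℂ \ (−∞, 0]. Then the principal branch of h_α(z) = (1 + 1/z)^α satisfies h_α(z) = 1 + (sin(απ)/π) · ∫₀¹ (1/u − 1)^α / (u + z) du, where the integral is a complex-valued integral over u ∈ (0,1). -/
open Real Complex

namespace HAlpha

open MeasureTheory Filter Topology Set

noncomputable def W (α u : ℝ) : ℝ := u ^ (-α) * (1 - u) ^ α

lemma W_eq {α u : ℝ} (h0 : 0 < u) (h1 : u ≤ 1) : (1 / u - 1 : ℝ) ^ α = W α u := by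
  have : (1 / u - 1 : ℝ) = (1 - u) / u := by field_simp
  rw [this, Real.div_rpow (by linarith) h0.le, W, Real.rpow_neg h0.le]
  field_simp

lemma W_beta {α u : ℝ} (h0 : 0 < u) (h1 : u ≤ 1) :
    (u : ℂ) ^ ((1 - α : ℂ) - 1) * (1 - (u : ℂ)) ^ ((1 + α : ℂ) - 1) = (W α u : ℂ) := by
  rw [W, Complex.ofReal_mul, Complex.ofReal_cpow h0.le, Complex.ofReal_cpow (by linarith)]
  push_cast
  congr 2 <;> ring

lemma W_int {α : ℝ} (hα : α ∈ Ioo (-1 : ℝ) 1) :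
    IntervalIntegrable (fun u => (W α u : ℂ)) volume 0 1 := by
  have h := Complex.betaIntegral_convergent (u := (1 - α : ℂ)) (v := (1 + α : ℂ))
    (by simp; linarith [hα.2]) (by simp; linarith [hα.1])
  refine h.congr ?_
  intro u hu
  rw [uIoc_of_le zero_le_one] at hu
  exact W_beta hu.1 hu.2

lemma W_val {α : ℝ} (hα : α ∈ Ioo (-1 : ℝ) 1) :
    ((Real.sin (α * π) / π : ℝ) : ℂ) * ∫ u in (0 : ℝ)..1, (W α u : ℂ) = α := by
  by_cases h0 : α = 0
  · simp [h0]
  have h1 : ∫ u in (0 : ℝ)..1, (W α u : ℂ) = Complex.betaIntegral (1 - α) (1 + α) := by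
    rw [Complex.betaIntegral]
    apply intervalIntegral.integral_congr_ae
    refine Eventually.of_forall fun u hu => ?_
    rw [uIoc_of_le zero_le_one] at hu
    exact (W_beta hu.1 hu.2).symm
  have h2 := Complex.Gamma_mul_Gamma_eq_betaIntegral (s := (1 - α : ℂ)) (t := (1 + α : ℂ))
    (by simp; linarith [hα.2]) (by simp; linarith [hα.1])
  have h3 : (1 - α : ℂ) + (1 + α) = (1 : ℂ) + 1 := by ring
  have hα0 : (α : ℂ) ≠ 0 := by exact_mod_cast h0
  rw [h3, Complex.Gamma_add_one 1 one_ne_zero, Complex.Gamma_one, one_mul, one_mul,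
    add_comm (1 : ℂ) α, Complex.Gamma_add_one _ hα0] at h2
  have h4 := Complex.Gamma_mul_Gamma_one_sub (α : ℂ)
  rw [h1, add_comm (1 : ℂ) α, ← h2]
  have h5 : Complex.Gamma (1 - α) * (α * Complex.Gamma α)
      = α * (π / Complex.sin (π * α)) := by rw [← h4]; ring
  rw [h5]
  have hs : Complex.sin (π * α) ≠ 0 := by
    have : Real.sin (π * α) ≠ 0 := by
      intro h
      rw [Real.sin_eq_zero_iff] at h
      obtain ⟨n, hn⟩ := h
      have hn' : (n : ℝ) = α := by
        have := Real.pi_pos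
        have h6 : π * (n : ℝ) = π * α := by linarith
        exact mul_left_cancel₀ this.ne' h6
      have a1 : (-1 : ℝ) < n := by rw [hn']; exact hα.1
      have a2 : (n : ℝ) < 1 := by rw [hn']; exact hα.2
      have a1' : -1 < n := by exact_mod_cast a1
      have a2' : n < 1 := by exact_mod_cast a2
      have : n = 0 := by omega
      apply h0
      rw [← hn', this]; simp
    exact_mod_cast this
  have hp : (π : ℂ) ≠ 0 := by exact_mod_cast Real.pi_ne_zero
  push_cast
  rw [mul_comm (α : ℂ) (π : ℂ)]
  field_simp

lemma bound {z : ℂ} (hz : z ∈ slitPlane) :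
    ∃ ε > 0, ∀ x ∈ Metric.ball z ε, ∀ u : ℝ, 0 ≤ u → ε ≤ ‖(u : ℂ) + x‖ := by
  obtain ⟨δ, hδ, hb⟩ := Metric.isOpen_iff.1 isOpen_slitPlane z hz
  refine ⟨δ / 2, by positivity, fun x hx u hu => ?_⟩
  by_contra! h
  have : (-(u : ℂ)) ∈ slitPlane := by
    apply hb
    rw [Metric.mem_ball] at hx ⊢
    have : dist (-(u : ℂ)) x < δ / 2 := by
      rw [dist_eq_norm, ← norm_neg]
      rwa [show -(-(u : ℂ) - x) = (u : ℂ) + x by ring]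
    linarith [dist_triangle (-(u : ℂ)) x z]
  rw [mem_slitPlane_iff] at this
  simp at this
  linarith

lemma int_mul {α : ℝ} (hα : α ∈ Ioo (-1 : ℝ) 1) {g : ℝ → ℂ} (hg : ContinuousOn g (Icc 0 1)) :
    IntervalIntegrable (fun u => (W α u : ℂ) * g u) volume 0 1 :=
  (W_int hα).mul_continuousOn (by rwa [uIcc_of_le zero_le_one])

lemma ne_zero {z : ℂ} (hz : z ∈ slitPlane) {u : ℝ} (hu : 0 ≤ u) : (u : ℂ) + z ≠ 0 := by
  obtain ⟨ε, h, hb⟩ := bound hz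
  have := hb z (Metric.mem_ball_self h) u hu
  exact norm_pos_iff.1 (by linarith)

noncomputable def F (α : ℝ) (z : ℂ) : ℂ := ∫ u in (0 : ℝ)..1, (W α u : ℂ) * ((u : ℂ) + z)⁻¹

lemma cont_inv {z : ℂ} (hz : z ∈ slitPlane) :
    ContinuousOn (fun u : ℝ => ((u : ℂ) + z)⁻¹) (Icc 0 1) := by
  apply ContinuousOn.inv₀ (by fun_prop)
  intro u hu
  exact ne_zero hz hu.1

lemma F_deriv {α : ℝ} (hα : α ∈ Ioo (-1 : ℝ) 1) {z : ℂ} (hz : z ∈ slitPlane) :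
    HasDerivAt (F α) (∫ u in (0 : ℝ)..1, (W α u : ℂ) * (-(((u : ℂ) + z)⁻¹) ^ 2)) z := by
  obtain ⟨ε, h, hb⟩ := bound hz
  have hball : ∀ x ∈ Metric.ball z ε, ∀ u : ℝ, 0 ≤ u → (u : ℂ) + x ≠ 0 := by
    intro x hx u hu
    exact norm_pos_iff.1 (lt_of_lt_of_le h (hb x hx u hu))
  have hWm := (W_int hα)
  refine (intervalIntegral.hasDerivAt_integral_of_dominated_loc_of_deriv_le
    (F := fun (x : ℂ) (u : ℝ) => (W α u : ℂ) * ((u : ℂ) + x)⁻¹)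
    (F' := fun (x : ℂ) (u : ℝ) => (W α u : ℂ) * (-(((u : ℂ) + x)⁻¹) ^ 2))
    (bound := fun u => ‖(W α u : ℂ)‖ * (ε⁻¹) ^ 2)
    (Metric.ball_mem_nhds z h) ?_ ?_ ?_ ?_ ?_ ?_).2
  · refine Eventually.of_forall fun x => ?_
    have h1 := hWm.aestronglyMeasurable
    rw [← uIoc_of_le zero_le_one] at h1
    refine h1.mul (Measurable.aestronglyMeasurable ?_)
    fun_prop
  · exact int_mul hα (cont_inv hz)
  · have := (int_mul hα (((cont_inv hz).pow 2).neg)).aestronglyMeasurable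
    rw [← uIoc_of_le zero_le_one] at this
    exact this
  · refine Eventually.of_forall fun u hu x hx => ?_
    rw [uIoc_of_le zero_le_one] at hu
    rw [norm_mul, norm_neg, norm_pow, norm_inv]
    gcongr
    exact hb x hx u hu.1.le
  · exact hWm.norm.mul_const _
  · refine Eventually.of_forall fun u hu x hx => ?_
    rw [uIoc_of_le zero_le_one] at hu
    have := (((hasDerivAt_id x).const_add (u : ℂ)).inv (hball x hx u hu.1.le)).const_mul (W α u : ℂ)
    refine HasDerivAt.congr_deriv (f := fun x : ℂ => (W α u : ℂ) * ((u : ℂ) + x)⁻¹) this ?_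
    simp [div_eq_mul_inv]

noncomputable def Q (α u : ℝ) : ℝ := u ^ (1 - α) * (1 - u) ^ (1 + α)

lemma Q_deriv {α u : ℝ} (h0 : 0 < u) (h1 : u < 1) :
    HasDerivAt (Q α) (W α u * (1 - α - 2 * u)) u := by
  have h1' : 0 < 1 - u := by linarith
  have a := (Real.hasDerivAt_rpow_const (x := u) (p := 1 - α) (Or.inl h0.ne'))
  have b := ((hasDerivAt_id u).const_sub 1).rpow_const (p := 1 + α) (Or.inl h1'.ne')
  refine HasDerivAt.congr_deriv (f := Q α) (a.mul b) ?_
  simp only [id]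
  rw [W, show 1 - α - 1 = -α by ring, show 1 + α - 1 = α by ring,
    show 1 - α = -α + 1 by ring, show 1 + α = α + 1 by ring, Real.rpow_add_one h0.ne',
    Real.rpow_add_one h1'.ne']
  ring

lemma W_Q {α u : ℝ} (h0 : 0 < u) (h1 : u < 1) : Q α u = W α u * (u * (1 - u)) := by
  have h1' : 0 < 1 - u := by linarith
  rw [W, Q, show 1 - α = -α + 1 by ring, show 1 + α = α + 1 by ring, Real.rpow_add_one h0.ne',
    Real.rpow_add_one h1'.ne']
  ring

lemma parts {α : ℝ} (hα : α ∈ Ioo (-1 : ℝ) 1) {z : ℂ} (hz : z ∈ slitPlane) :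
    ∫ u in (0 : ℝ)..1, (W α u : ℂ) * ((1 - α - 2 * u) * ((u : ℂ) + z)⁻¹
      - (u * (1 - u)) * (((u : ℂ) + z)⁻¹) ^ 2) = 0 := by
  have hc := cont_inv hz
  have key := intervalIntegral.integral_eq_sub_of_hasDerivAt_of_le (a := 0) (b := 1)
    (f := fun u : ℝ => (Q α u : ℂ) * ((u : ℂ) + z)⁻¹)
    (f' := fun u : ℝ => (W α u : ℂ) * ((1 - α - 2 * u) * ((u : ℂ) + z)⁻¹
      - (u * (1 - u)) * (((u : ℂ) + z)⁻¹) ^ 2)) zero_le_one ?_ ?_ ?_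
  · rw [key]
    have := hα.1
    have := hα.2
    simp [Q, Real.zero_rpow (show 1 - α ≠ 0 by linarith), Real.zero_rpow (show 1 + α ≠ 0 by linarith)]
  · refine ContinuousOn.mul ?_ hc
    refine Complex.continuous_ofReal.comp_continuousOn (Continuous.continuousOn ?_)
    unfold Q
    exact (Real.continuous_rpow_const (by linarith [hα.2])).mul
      ((Real.continuous_rpow_const (by linarith [hα.1])).comp (continuous_const.sub continuous_id))
  · intro u hu
    have a := (Q_deriv (α := α) hu.1 hu.2).ofReal_comp
    have b := (((hasDerivAt_id u).ofReal_comp).add_const z).inv (ne_zero hz hu.1.le)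
    refine HasDerivAt.congr_deriv (f := fun u : ℝ => (Q α u : ℂ) * ((u : ℂ) + z)⁻¹) (a.mul b) ?_
    simp only [id]
    rw [W_Q hu.1 hu.2]
    push_cast
    rw [div_eq_mul_inv, ← inv_pow]
    ring
  · apply int_mul hα
    fun_prop

lemma ode {α : ℝ} (hα : α ∈ Ioo (-1 : ℝ) 1) {z : ℂ} (hz : z ∈ slitPlane) :
    z * (z + 1) * (∫ u in (0 : ℝ)..1, (W α u : ℂ) * (-(((u : ℂ) + z)⁻¹) ^ 2)) =
      - (∫ u in (0 : ℝ)..1, (W α u : ℂ)) - α * F α z := by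
  have hc := cont_inv hz
  have i1 : IntervalIntegrable (fun u : ℝ => z * (z + 1) * ((W α u : ℂ) * (-(((u : ℂ) + z)⁻¹) ^ 2)))
      volume 0 1 := (int_mul hα (((cont_inv hz).pow 2).neg)).const_mul _
  have i2 : IntervalIntegrable (fun u : ℝ => (W α u : ℂ) * ((1 - α - 2 * u) * ((u : ℂ) + z)⁻¹
      - (u * (1 - u)) * (((u : ℂ) + z)⁻¹) ^ 2)) volume 0 1 := by
    apply int_mul hα
    fun_prop
  have i3 : IntervalIntegrable (fun u : ℝ => -(W α u : ℂ)) volume 0 1 := (W_int hα).neg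
  have i4 : IntervalIntegrable (fun u : ℝ => (α : ℂ) * ((W α u : ℂ) * ((u : ℂ) + z)⁻¹)) volume 0 1 :=
    (int_mul hα hc).const_mul _
  rw [← add_zero (z * (z + 1) * _), ← parts hα hz, F, ← intervalIntegral.integral_const_mul,
    ← intervalIntegral.integral_const_mul, ← intervalIntegral.integral_neg,
    ← intervalIntegral.integral_sub i3 i4, ← intervalIntegral.integral_add i1 i2]
  apply intervalIntegral.integral_congr
  intro u hu
  rw [uIcc_of_le zero_le_one] at hu
  have := ne_zero hz hu.1
  simp only
  field_simp
  ring

lemma one_add_inv {z : ℂ} (hz : z ∈ slitPlane) : 1 + z⁻¹ ∈ slitPlane := by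
  by_contra h
  have hz0 : z ≠ 0 := slitPlane_ne_zero hz
  rw [mem_slitPlane_iff] at h
  push Not at h
  obtain ⟨h1, h2⟩ := h
  simp only [add_re, one_re, add_im, one_im, zero_add] at h1 h2
  have h3 : z⁻¹ = ((z⁻¹).re : ℂ) := Complex.ext rfl (by simpa using h2)
  set r := (z⁻¹).re
  have h4 : z = ((r⁻¹ : ℝ) : ℂ) := by rw [ofReal_inv, ← h3, inv_inv]
  rw [h4, ofReal_mem_slitPlane, inv_pos] at hz
  linarith

noncomputable def G (α : ℝ) (z : ℂ) : ℂ :=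
  (1 + (Real.sin (α * π) / π : ℝ) * F α z) * (1 + z⁻¹) ^ (-(α : ℂ))

lemma G_deriv {α : ℝ} (hα : α ∈ Ioo (-1 : ℝ) 1) {z : ℂ} (hz : z ∈ slitPlane) :
    HasDerivAt (G α) 0 z := by
  have hp := one_add_inv hz
  have hp0 : 1 + z⁻¹ ≠ 0 := slitPlane_ne_zero hp
  have hz0 : z ≠ 0 := slitPlane_ne_zero hz
  have a := ((F_deriv hα hz).const_mul ((Real.sin (α * π) / π : ℝ) : ℂ)).const_add 1
  have b := ((hasDerivAt_inv hz0).const_add 1).cpow_const (c := -(α : ℂ)) hp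
  refine HasDerivAt.congr_deriv (f := G α) (a.mul b) ?_
  have o := ode hα hz
  have v := W_val hα
  rw [Complex.cpow_sub _ _ hp0, cpow_one]
  have hz1 : z * (z + 1) ≠ 0 := by
    have : z + 1 = z * (1 + z⁻¹) := by field_simp
    rw [this]
    exact mul_ne_zero hz0 (mul_ne_zero hz0 hp0)
  have hp1 : 1 + z⁻¹ = z * (z + 1) / z ^ 2 := by field_simp
  generalize (1 + z⁻¹) ^ (-(α : ℂ)) = X
  generalize (∫ u in (0 : ℝ)..1, (W α u : ℂ) * (-(((u : ℂ) + z)⁻¹) ^ 2)) = D at *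
  generalize (∫ u in (0 : ℝ)..1, (W α u : ℂ)) = I at *
  generalize ((Real.sin (α * π) / π : ℝ) : ℂ) = c at *
  rw [hp1]
  have hD : D = (-I - α * F α z) / (z * (z + 1)) := by
    rw [← o, mul_div_cancel_left₀ _ hz1]
  have e : -(α : ℂ) * (X / (z * (z + 1) / z ^ 2)) * -(z ^ 2)⁻¹ = α * X / (z * (z + 1)) := by
    field_simp
  rw [e, hD]
  have : c * ((-I - α * F α z) / (z * (z + 1))) * X +
      (1 + c * F α z) * (α * X / (z * (z + 1))) = (α - c * I) * (X / (z * (z + 1))) := by ring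
  rw [this, v]; ring

lemma F_lim {α : ℝ} (hα : α ∈ Ioo (-1 : ℝ) 1) :
    Tendsto (fun x : ℝ => F α (x : ℂ)) atTop (𝓝 0) := by
  apply squeeze_zero_norm' (a := fun x : ℝ => (∫ u in (0 : ℝ)..1, ‖(W α u : ℂ)‖) * x⁻¹)
  · filter_upwards [eventually_gt_atTop 0] with x hx
    rw [← intervalIntegral.integral_mul_const]
    apply intervalIntegral.norm_integral_le_of_norm_le zero_le_one
    · refine Eventually.of_forall fun u hu => ?_
      rw [norm_mul, norm_inv, ← ofReal_add, norm_real (u + x),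
        Real.norm_of_nonneg (show 0 ≤ u + x by linarith [hu.1])]
      have := hu.1
      gcongr
      linarith
    · exact (W_int hα).norm.mul_const _
  · simpa using tendsto_inv_atTop_zero.const_mul (∫ u in (0 : ℝ)..1, ‖(W α u : ℂ)‖)

lemma G_lim {α : ℝ} (hα : α ∈ Ioo (-1 : ℝ) 1) :
    Tendsto (fun x : ℝ => G α (x : ℂ)) atTop (𝓝 1) := by
  have a := ((F_lim hα).const_mul ((Real.sin (α * π) / π : ℝ) : ℂ)).const_add 1
  have h : Tendsto (fun x : ℝ => 1 + (x : ℂ)⁻¹) atTop (𝓝 1) := by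
    have := (Complex.continuous_ofReal.tendsto 0).comp tendsto_inv_atTop_zero
    simpa [Function.comp_def] using this.const_add (1 : ℂ)
  have b := Filter.Tendsto.cpow h (tendsto_const_nhds (x := -(α : ℂ))) (by simp)
  simpa [G] using a.mul b

lemma G_eq {α : ℝ} (hα : α ∈ Ioo (-1 : ℝ) 1) {z : ℂ} (hz : z ∈ slitPlane) : G α z = 1 := by
  have hpre : IsPreconnected slitPlane :=
    (starConvex_one_slitPlane.isPathConnected one_mem_slitPlane).isConnected.isPreconnected
  have hconst : ∀ x ∈ slitPlane, G α x = G α z := fun x hx =>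
    isOpen_slitPlane.is_const_of_deriv_eq_zero hpre
      (fun y hy => (G_deriv hα hy).differentiableAt.differentiableWithinAt)
      (fun y hy => (G_deriv hα hy).deriv) hx hz
  refine tendsto_nhds_unique (Tendsto.congr' ?_ tendsto_const_nhds) (G_lim hα)
  filter_upwards [eventually_gt_atTop 0] with x hx
  exact (hconst x (ofReal_mem_slitPlane.2 hx)).symm

end HAlpha

theorem h_alpha_integral_representation_complex
    (α : ℝ) (hα : α ∈ Set.Ioo (-1 : ℝ) 1)
    (z : ℂ) (hz : ¬ (z.im = 0 ∧ z.re ≤ 0)) :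
    (1 + 1 / z) ^ (α : ℂ) =
      1 + (Real.sin (α * π) / π : ℝ) *
        ∫ u in (0 : ℝ)..1, (((1 / u - 1 : ℝ) ^ α : ℝ) : ℂ) / ((u : ℂ) + z) := by
  have hz' : z ∈ slitPlane := by
    rw [mem_slitPlane_iff]
    by_contra! h
    exact hz ⟨h.2, h.1⟩
  have hF : ∫ u in (0 : ℝ)..1, (((1 / u - 1 : ℝ) ^ α : ℝ) : ℂ) / ((u : ℂ) + z) = HAlpha.F α z := by
    apply intervalIntegral.integral_congr_ae
    refine Filter.Eventually.of_forall fun u hu => ?_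
    rw [Set.uIoc_of_le zero_le_one] at hu
    rw [HAlpha.W_eq hu.1 hu.2, div_eq_mul_inv]
  rw [hF, one_div]
  have h := HAlpha.G_eq hα hz'
  have hp0 : 1 + z⁻¹ ≠ 0 := slitPlane_ne_zero (HAlpha.one_add_inv hz')
  have hX : (1 + z⁻¹) ^ (α : ℂ) ≠ 0 := by simp [Complex.cpow_eq_zero_iff, hp0]
  rw [HAlpha.G, Complex.cpow_neg, mul_inv_eq_one₀ hX] at h
  exact h.symm
end

section
/- For λ ∈ (0, 1) and real numbers x, y > 0 with x ≠ y, the weighted geometric mean G_{x,y;λ}(t) = (x+t)^λ (y+t)^{1−λ} is a Bernstein function of t on (−min{x,y}, ∞): it is nonnegative, has derivatives of all orders, and its first derivative is completely monotonic on (−min{x,y}, ∞). -/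
open Real

theorem wg_hasDeriv (x y p q t : ℝ) (ha : 0 < x + t) (hb : 0 < y + t) :
    HasDerivAt (fun t : ℝ => (x + t) ^ p * (y + t) ^ q)
      (p * ((x + t) ^ (p - 1) * (y + t) ^ q) + q * ((x + t) ^ p * (y + t) ^ (q - 1))) t := by
  have h1 : HasDerivAt (fun t : ℝ => (x + t) ^ p) (1 * p * (x + t) ^ (p - 1)) t :=
    ((hasDerivAt_id t).const_add x).rpow_const (Or.inl ha.ne')
  have h2 : HasDerivAt (fun t : ℝ => (y + t) ^ q) (1 * q * (y + t) ^ (q - 1)) t :=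
    ((hasDerivAt_id t).const_add y).rpow_const (Or.inl hb.ne')
  have h3 := h1.mul h2
  refine HasDerivAt.congr_deriv (f := fun t : ℝ => (x + t) ^ p * (y + t) ^ q) h3 ?_
  ring

theorem wg_contDiffAt (x y p q t : ℝ) (ha : 0 < x + t) (hb : 0 < y + t) (n : WithTop ℕ∞) :
    ContDiffAt ℝ n (fun t : ℝ => (x + t) ^ p * (y + t) ^ q) t := by
  have h1 : ContDiffAt ℝ n (fun t : ℝ => (x + t) ^ p) t :=
    (contDiffAt_const.add contDiffAt_id).rpow_const_of_ne ha.ne'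
  have h2 : ContDiffAt ℝ n (fun t : ℝ => (y + t) ^ q) t :=
    (contDiffAt_const.add contDiffAt_id).rpow_const_of_ne hb.ne'
  exact h1.mul h2

theorem wg_ev (x y t : ℝ) (ha : 0 < x + t) (hb : 0 < y + t) :
    ∀ᶠ s in nhds t, 0 < x + s ∧ 0 < y + s := by
  have h1 : Continuous fun s : ℝ => x + s := by fun_prop
  have h2 : Continuous fun s : ℝ => y + s := by fun_prop
  exact (h1.continuousAt.eventually (lt_mem_nhds ha)).and
    (h2.continuousAt.eventually (lt_mem_nhds hb))

theorem wg_cm (x y : ℝ) (n : ℕ) : ∀ p q t : ℝ, p ≤ 0 → q ≤ 0 → 0 < x + t → 0 < y + t →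
    0 ≤ (-1 : ℝ) ^ n * iteratedDeriv n (fun t : ℝ => (x + t) ^ p * (y + t) ^ q) t := by
  induction n with
  | zero =>
    intro p q t hp hq ha hb
    simp only [pow_zero, iteratedDeriv_zero, one_mul]
    positivity
  | succ n ih =>
    intro p q t hp hq ha hb
    have he : deriv (fun t : ℝ => (x + t) ^ p * (y + t) ^ q) =ᶠ[nhds t]
        ((fun t : ℝ => p * ((x + t) ^ (p - 1) * (y + t) ^ q)) +
          (fun t : ℝ => q * ((x + t) ^ p * (y + t) ^ (q - 1)))) := by
      filter_upwards [wg_ev x y t ha hb] with s hs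
      exact (wg_hasDeriv x y p q s hs.1 hs.2).deriv
    rw [iteratedDeriv_succ', he.iteratedDeriv_eq, iteratedDeriv_add
      (contDiffAt_const.mul (wg_contDiffAt x y _ _ t ha hb _))
      (contDiffAt_const.mul (wg_contDiffAt x y _ _ t ha hb _)),
      iteratedDeriv_const_mul_field, iteratedDeriv_const_mul_field]
    have h1 := ih (p - 1) q t (by linarith) hq ha hb
    have h2 := ih p (q - 1) t hp (by linarith) ha hb
    have h3 := mul_nonneg (neg_nonneg.2 hp) h1
    have h4 := mul_nonneg (neg_nonneg.2 hq) h2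
    rw [pow_succ]
    linarith

theorem weighted_geometric_mean_bernstein
    (lam x y : ℝ) (hlam : lam ∈ Set.Ioo (0 : ℝ) 1)
    (hx : 0 < x) (hy : 0 < y) (hxy : x ≠ y) :
    (∀ t : ℝ, t ∈ Set.Ioi (-(min x y)) →
        0 ≤ (x + t) ^ lam * (y + t) ^ (1 - lam)) ∧
      ContDiffOn ℝ (⊤ : ℕ∞) (fun t : ℝ => (x + t) ^ lam * (y + t) ^ (1 - lam))
        (Set.Ioi (-(min x y))) ∧
      ∀ n : ℕ, ∀ t : ℝ, t ∈ Set.Ioi (-(min x y)) →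
        0 ≤ (-1 : ℝ) ^ n *
          iteratedDeriv n
            (deriv (fun t : ℝ => (x + t) ^ lam * (y + t) ^ (1 - lam))) t := by
  obtain ⟨h0, h1⟩ := hlam
  have hpos : ∀ t : ℝ, t ∈ Set.Ioi (-(min x y)) → 0 < x + t ∧ 0 < y + t := by
    intro t ht
    rw [Set.mem_Ioi] at ht
    have := min_le_left x y
    have := min_le_right x y
    constructor <;> linarith
  refine ⟨?_, ?_, ?_⟩
  · intro t ht
    obtain ⟨ha, hb⟩ := hpos t ht
    positivity
  · intro t ht
    obtain ⟨ha, hb⟩ := hpos t ht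
    exact (wg_contDiffAt x y _ _ t ha hb _).contDiffWithinAt
  · intro n t ht
    obtain ⟨ha, hb⟩ := hpos t ht
    have hd : ∀ s : ℝ, 0 < x + s → 0 < y + s →
        deriv (fun t : ℝ => (x + t) ^ lam * (y + t) ^ (1 - lam)) s =
        lam * ((x + s) ^ (lam - 1) * (y + s) ^ (1 - lam)) +
          (1 - lam) * ((x + s) ^ lam * (y + s) ^ (1 - lam - 1)) :=
      fun s h h' => (wg_hasDeriv x y _ _ s h h').deriv
    cases n with
    | zero =>
      rw [iteratedDeriv_zero, hd t ha hb]
      have : 0 < 1 - lam := by linarith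
      positivity
    | succ n =>
      have he : deriv (deriv (fun t : ℝ => (x + t) ^ lam * (y + t) ^ (1 - lam))) =ᶠ[nhds t]
          (fun s : ℝ => (-(lam * (1 - lam) * (x - y) ^ 2)) *
            ((x + s) ^ (lam - 2) * (y + s) ^ (-1 - lam))) := by
        filter_upwards [wg_ev x y t ha hb] with s hs
        obtain ⟨hs1, hs2⟩ := hs
        have he1 : deriv (fun t : ℝ => (x + t) ^ lam * (y + t) ^ (1 - lam)) =ᶠ[nhds s]
            (fun s : ℝ => lam * ((x + s) ^ (lam - 1) * (y + s) ^ (1 - lam)) +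
          (1 - lam) * ((x + s) ^ lam * (y + s) ^ (1 - lam - 1))) := by
          filter_upwards [wg_ev x y s hs1 hs2] with r hr
          exact hd r hr.1 hr.2
        rw [he1.deriv_eq]
        have hD := (((wg_hasDeriv x y (lam - 1) (1 - lam) s hs1 hs2).const_mul lam).add
          ((wg_hasDeriv x y lam (1 - lam - 1) s hs1 hs2).const_mul (1 - lam))).deriv
        refine Eq.trans hD ?_
        have e1 : (x + s) ^ (lam - 1) = (x + s) ^ (lam - 2) * (x + s) := by
          rw [← rpow_add_one hs1.ne']; congr 1; ring
        have e2 : (x + s) ^ lam = (x + s) ^ (lam - 2) * (x + s) * (x + s) := by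
          rw [← e1, ← rpow_add_one hs1.ne']; congr 1; ring
        have e3 : (x + s) ^ (lam - 1 - 1) = (x + s) ^ (lam - 2) := by congr 1; ring
        have f1 : (y + s) ^ (1 - lam - 1) = (y + s) ^ (-1 - lam) * (y + s) := by
          rw [← rpow_add_one hs2.ne']; congr 1; ring
        have f2 : (y + s) ^ (1 - lam) = (y + s) ^ (-1 - lam) * (y + s) * (y + s) := by
          rw [← f1, ← rpow_add_one hs2.ne']; congr 1; ring
        have f3 : (y + s) ^ (1 - lam - 1 - 1) = (y + s) ^ (-1 - lam) := by congr 1; ring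
        rw [e3, f3, e2, e1, f2, f1]
        ring
      rw [iteratedDeriv_succ', he.iteratedDeriv_eq, iteratedDeriv_const_mul_field]
      have h2 := wg_cm x y n (lam - 2) (-1 - lam) t (by linarith) (by linarith) ha hb
      have h3 : 0 ≤ lam * (1 - lam) * (x - y) ^ 2 :=
        mul_nonneg (mul_nonneg h0.le (by linarith)) (sq_nonneg _)
      have h4 := mul_nonneg h3 h2
      rw [pow_succ]
      linarith
end

section
/- For λ ∈ (0, 1) and every s > 0, the quantity F(λ, s) = ∫₀¹ (1/u − 1)^λ · (1 − λ/(1−u)) · e^{−us} du is strictly positive. -/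
open Real

theorem G_deriv (lam : ℝ) (u : ℝ) (hu : u ∈ Set.Ioo (0 : ℝ) 1) :
    HasDerivAt (fun u : ℝ => u ^ (1 - lam) * (1 - u) ^ lam)
      ((1 / u - 1) ^ lam * (1 - lam / (1 - u))) u := by
  have h0 : 0 < u := hu.1
  have h1 : 0 < 1 - u := sub_pos.2 hu.2
  have a := (hasDerivAt_id u).rpow_const (p := 1 - lam) (Or.inl h0.ne')
  have b := ((hasDerivAt_id u).const_sub 1).rpow_const (p := lam) (Or.inl h1.ne')
  have c := a.mul b
  refine c.congr_deriv ?_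
  have e1 : 1 / u - 1 = (1 - u) / u := by field_simp
  have e2 : (1 : ℝ) - lam - 1 = - lam := by ring
  have p0 : 0 < u ^ lam := rpow_pos_of_pos h0 _
  simp only [id]
  rw [e1, e2, div_rpow h1.le h0.le, rpow_sub h0, rpow_sub h1, rpow_neg h0.le, rpow_one, rpow_one]
  field_simp
  ring

theorem G_cont (lam : ℝ) (hlam : lam ∈ Set.Ioo (0 : ℝ) 1) :
    Continuous (fun u : ℝ => u ^ (1 - lam) * (1 - u) ^ lam) := by
  have := hlam.1
  have := hlam.2
  exact (continuous_id.rpow_const (fun _ => Or.inr (by linarith))).mul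
    ((continuous_const.sub continuous_id).rpow_const (fun _ => Or.inr (by linarith)))

theorem g_int (lam : ℝ) (hlam : lam ∈ Set.Ioo (0 : ℝ) 1) :
    IntervalIntegrable (fun u : ℝ => (1 / u - 1) ^ lam * (1 - lam / (1 - u)))
      MeasureTheory.volume 0 1 := by
  obtain ⟨l0, l1⟩ := hlam
  have hG := G_cont lam ⟨l0, l1⟩
  have hw : ∀ u ∈ Set.Ioo (0 : ℝ) 1, 0 ≤ (1 / u - 1) ^ lam := by
    intro u hu
    apply rpow_nonneg
    have := (one_le_div hu.1).2 hu.2.le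
    linarith
  have A : IntervalIntegrable (fun u : ℝ => (1 / u - 1) ^ lam * (1 - lam / (1 - u)))
      MeasureTheory.volume 0 (1 - lam) := by
    rw [intervalIntegrable_iff_integrableOn_Ioc_of_le (by linarith)]
    refine intervalIntegral.integrableOn_deriv_of_nonneg hG.continuousOn
      (fun x hx => G_deriv lam x ⟨hx.1, by linarith [hx.2]⟩) ?_
    intro x hx
    have hx1 : 0 < 1 - x := by linarith [hx.2]
    refine mul_nonneg (hw x ⟨hx.1, by linarith⟩) ?_
    have := (div_le_one hx1).2 (by linarith [hx.2] : lam ≤ 1 - x)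
    linarith
  have B : IntervalIntegrable (fun u : ℝ => -((1 / u - 1) ^ lam * (1 - lam / (1 - u))))
      MeasureTheory.volume (1 - lam) 1 := by
    rw [intervalIntegrable_iff_integrableOn_Ioc_of_le (by linarith)]
    refine intervalIntegral.integrableOn_deriv_of_nonneg hG.neg.continuousOn
      (fun x hx => (G_deriv lam x ⟨by linarith [hx.1], hx.2⟩).neg) ?_
    intro x hx
    have hx1 : 0 < 1 - x := by linarith [hx.2]
    rw [← mul_neg]
    refine mul_nonneg (hw x ⟨by linarith [hx.1], hx.2⟩) ?_
    have := (one_le_div hx1).2 (by linarith [hx.1] : 1 - x ≤ lam)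
    linarith
  have B' := B.neg
  refine A.trans (B'.congr ?_)
  intro x _
  simp

theorem F_pos
    (lam : ℝ) (hlam : lam ∈ Set.Ioo (0 : ℝ) 1) (s : ℝ) (hs : 0 < s) :
    0 < ∫ u in (0 : ℝ)..1,
        (1 / u - 1) ^ lam * (1 - lam / (1 - u)) * Real.exp (-u * s) := by
  have hG := G_cont lam hlam
  have hE : Continuous (fun u : ℝ => Real.exp (-u * s)) := by fun_prop
  have hI : IntervalIntegrable
      (fun u : ℝ => (1 / u - 1) ^ lam * (1 - lam / (1 - u)) * Real.exp (-u * s))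
      MeasureTheory.volume 0 1 := (g_int lam hlam).mul_continuousOn hE.continuousOn
  have hc : Continuous
      (fun u : ℝ => (u ^ (1 - lam) * (1 - u) ^ lam) * (Real.exp (-u * s) * s)) :=
    hG.mul (hE.mul continuous_const)
  have hJ := hc.intervalIntegrable (μ := MeasureTheory.volume) 0 1
  have key := intervalIntegral.integral_eq_sub_of_hasDerivAt_of_le (zero_le_one' ℝ)
    (f := fun u : ℝ => (u ^ (1 - lam) * (1 - u) ^ lam) * Real.exp (-u * s))
    (hG.mul hE).continuousOn (fun x hx => by
      have e : HasDerivAt (fun u : ℝ => Real.exp (-u * s)) (-(Real.exp (-x * s) * s)) x := by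
        have := (((hasDerivAt_id x).neg).mul_const s).exp
        simpa using this
      refine ((G_deriv lam x hx).mul e).congr_deriv ?_
      rw [mul_neg, ← sub_eq_add_neg]) (hI.sub hJ)
  rw [intervalIntegral.integral_sub hI hJ] at key
  have hpos : 0 < ∫ u in (0 : ℝ)..1,
      (u ^ (1 - lam) * (1 - u) ^ lam) * (Real.exp (-u * s) * s) := by
    refine intervalIntegral.intervalIntegral_pos_of_pos_on hJ ?_ zero_lt_one
    intro x hx
    have h0 : 0 < x := hx.1
    have h1 : 0 < 1 - x := sub_pos.2 hx.2
    positivity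
  have z1 : (0 : ℝ) ^ lam = 0 := zero_rpow hlam.1.ne'
  have z2 : (0 : ℝ) ^ (1 - lam) = 0 := zero_rpow (sub_pos.2 hlam.2).ne'
  simp only [sub_self, z1, z2, mul_zero, zero_mul] at key
  linarith
end

section
/- For λ ∈ (0, 1), the integral ∫₀¹ (1/u − 1)^λ · (1 − λ/(1−u)) du equals 0. -/
open Real

/-- Integrability of the integrand together with the value of the integral. -/
theorem F_integral_aux (lam : ℝ) (hlam : lam ∈ Set.Ioo (0 : ℝ) 1) :
    IntervalIntegrable (fun u : ℝ => (1 / u - 1) ^ lam * (1 - lam / (1 - u)))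
      MeasureTheory.volume 0 1 ∧
    ∫ u in (0 : ℝ)..1, (1 / u - 1) ^ lam * (1 - lam / (1 - u)) = 0 := by
  obtain ⟨h0, h1⟩ := hlam
  have hcont : Continuous (fun u : ℝ => u ^ (1 - lam) * (1 - u) ^ lam) :=
    (continuous_id.rpow_const (fun _ => Or.inr (by linarith))).mul
      ((continuous_const.sub continuous_id).rpow_const (fun _ => Or.inr h0.le))
  have hder : ∀ x ∈ Set.Ioo (0 : ℝ) 1,
      HasDerivAt (fun u : ℝ => u ^ (1 - lam) * (1 - u) ^ lam)
        ((1 / x - 1) ^ lam * (1 - lam / (1 - x))) x := by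
    rintro x ⟨hx0, hx1⟩
    have hy : 0 < 1 - x := by linarith
    have d1 := (hasDerivAt_id x).rpow_const (p := 1 - lam) (Or.inl hx0.ne')
    have d2 := ((hasDerivAt_id x).const_sub 1).rpow_const (p := lam) (Or.inl hy.ne')
    refine (d1.mul d2).congr_deriv ?_
    have e1 : 1 / x - 1 = (1 - x) / x := by field_simp
    simp only [id]
    rw [e1, div_rpow hy.le hx0.le, rpow_sub_one hx0.ne', rpow_sub_one hy.ne',
      rpow_sub hx0, rpow_one]
    have := (rpow_pos_of_pos hx0 lam).ne'
    field_simp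
    ring
  have hpos : ∀ x ∈ Set.Ioo (0 : ℝ) 1, 0 ≤ (1 / x - 1) ^ lam := by
    rintro x ⟨hx0, hx1⟩
    apply rpow_nonneg
    have : 1 ≤ 1 / x := by rw [le_div_iff₀ hx0]; linarith
    linarith
  have i1 : IntervalIntegrable (fun u : ℝ => (1 / u - 1) ^ lam * (1 - lam / (1 - u)))
      MeasureTheory.volume 0 (1 - lam) := by
    apply intervalIntegral.intervalIntegrable_deriv_of_nonneg hcont.continuousOn
    · intro x hx
      rw [min_eq_left (by linarith), max_eq_right (by linarith)] at hx
      exact hder x ⟨hx.1, by linarith [hx.2]⟩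
    · intro x hx
      rw [min_eq_left (by linarith), max_eq_right (by linarith)] at hx
      refine mul_nonneg (hpos x ⟨hx.1, by linarith [hx.2]⟩) ?_
      rw [sub_nonneg, div_le_one (by linarith [hx.2])]
      linarith [hx.2]
  have i2 : IntervalIntegrable (fun u : ℝ => -((1 / u - 1) ^ lam * (1 - lam / (1 - u))))
      MeasureTheory.volume (1 - lam) 1 := by
    apply intervalIntegral.intervalIntegrable_deriv_of_nonneg hcont.neg.continuousOn
    · intro x hx
      rw [min_eq_left (by linarith), max_eq_right (by linarith)] at hx
      exact (hder x ⟨by linarith [hx.1], hx.2⟩).neg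
    · intro x hx
      rw [min_eq_left (by linarith), max_eq_right (by linarith)] at hx
      rw [← mul_neg]
      refine mul_nonneg (hpos x ⟨by linarith [hx.1], hx.2⟩) ?_
      rw [neg_sub, sub_nonneg, one_le_div (by linarith [hx.2])]
      linarith [hx.1]
  have i3 : IntervalIntegrable (fun u : ℝ => (1 / u - 1) ^ lam * (1 - lam / (1 - u)))
      MeasureTheory.volume (1 - lam) 1 := by
    simpa [Pi.neg_def] using i2.neg
  have hi := i1.trans i3
  refine ⟨hi, ?_⟩
  rw [intervalIntegral.integral_eq_sub_of_hasDerivAt_of_le zero_le_one hcont.continuousOn hder hi]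
  simp [zero_rpow h0.ne', zero_rpow (sub_pos.2 h1).ne']

theorem F_integral_zero
    (lam : ℝ) (hlam : lam ∈ Set.Ioo (0 : ℝ) 1) :
    ∫ u in (0 : ℝ)..1, (1 / u - 1) ^ lam * (1 - lam / (1 - u)) = 0 :=
  (F_integral_aux lam hlam).2
end

section
/- Let λ ∈ (0, 1) and x > y > 0. Then for every real t > −y, the weighted geometric mean admits the integral representation G_{x,y;λ}(t) = x^λ y^{1−λ} + t + (sin(λπ)/π) · (x−y) · ∫₀^∞ (F(λ, (x−y)s)/s) · e^{−sy} · (1 − e^{−st}) ds, where F(λ,s) = ∫₀¹ (1/u − 1)^λ (1 − λ/(1−u)) e^{−us} du. -/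
open Real MeasureTheory

/-- The function `F(λ, s)` from the paper. -/
noncomputable def paperF (lam s : ℝ) : ℝ :=
  ∫ u in (0 : ℝ)..1, (1 / u - 1) ^ lam * (1 - lam / (1 - u)) * Real.exp (-u * s)

noncomputable def hh (lam u : ℝ) : ℝ := u ^ (-lam) * (1 - u) ^ (lam - 1)
noncomputable def gg (lam u : ℝ) : ℝ := u ^ (1 - lam) * (1 - u) ^ lam

lemma gg_eq (lam u : ℝ) (hu : u ∈ Set.Ioo (0:ℝ) 1) : gg lam u = u * (1 - u) * hh lam u := by
  have h0 := hu.1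
  have h1 : 0 < 1 - u := by linarith [hu.2]
  have e1 : u ^ (1 - lam) = u * u ^ (-lam) := by
    rw [sub_eq_add_neg, Real.rpow_add h0, Real.rpow_one]
  have e2 : (1 - u) ^ lam = (1 - u) * (1 - u) ^ (lam - 1) := by
    rw [Real.rpow_sub_one h1.ne']; field_simp
  rw [gg, hh, e1, e2]; ring

lemma w_eq (lam u : ℝ) (hu : u ∈ Set.Ioo (0:ℝ) 1) :
    (1 / u - 1) ^ lam * (1 - lam / (1 - u)) = (1 - u - lam) * hh lam u := by
  have h0 := hu.1
  have h1 : 0 < 1 - u := by linarith [hu.2]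
  have e0 : 1 / u - 1 = (1 - u) / u := by field_simp
  rw [e0, hh, Real.div_rpow h1.le h0.le, Real.rpow_sub_one h1.ne', Real.rpow_neg h0.le]
  field_simp

lemma gg_cont (lam : ℝ) (hlam : lam ∈ Set.Ioo (0 : ℝ) 1) : Continuous (gg lam) := by
  unfold gg
  have := hlam.1
  have := hlam.2
  apply Continuous.mul
  · exact continuous_id.rpow_const (fun x => Or.inr (by linarith))
  · exact (continuous_const.sub continuous_id).rpow_const (fun x => Or.inr (by linarith))

lemma gg_deriv (lam u : ℝ) (hu : u ∈ Set.Ioo (0:ℝ) 1) :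
    HasDerivAt (gg lam) ((1 - u - lam) * hh lam u) u := by
  have h0 := hu.1
  have h1 : 0 < 1 - u := by linarith [hu.2]
  have d1 : HasDerivAt (fun u : ℝ => u ^ (1 - lam)) ((1 - lam) * u ^ (1 - lam - 1)) u :=
    Real.hasDerivAt_rpow_const (Or.inl h0.ne')
  have d2 : HasDerivAt (fun u : ℝ => (1 - u) ^ lam) (-1 * lam * (1 - u) ^ (lam - 1)) u :=
    ((hasDerivAt_id u).const_sub 1).rpow_const (Or.inl h1.ne')
  have d := d1.mul d2
  refine (d.congr_deriv ?_)
  have e1 : u ^ (1 - lam) = u * u ^ (-lam) := by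
    rw [sub_eq_add_neg, Real.rpow_add h0, Real.rpow_one]
  have e2 : (1 - u) ^ lam = (1 - u) * (1 - u) ^ (lam - 1) := by
    rw [Real.rpow_sub_one h1.ne']; field_simp
  have e3 : 1 - lam - 1 = -lam := by ring
  rw [hh, e3, e1, e2]; ring

lemma hh_cast (lam u : ℝ) (hu : u ∈ Set.Icc (0:ℝ) 1) :
    (u : ℂ) ^ (((1 - lam : ℝ) : ℂ) - 1) * (1 - (u : ℂ)) ^ ((lam : ℂ) - 1) = ((hh lam u : ℝ) : ℂ) := by
  have h1 : 0 ≤ 1 - u := by linarith [hu.2]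
  rw [hh]
  push_cast
  rw [Complex.ofReal_cpow hu.1, Complex.ofReal_cpow h1]
  push_cast
  congr 2
  ring

lemma hh_int (lam : ℝ) (hlam : lam ∈ Set.Ioo (0 : ℝ) 1) :
    IntegrableOn (hh lam) (Set.Ioo 0 1) := by
  have h := Complex.betaIntegral_convergent (u := ((1 - lam : ℝ) : ℂ)) (v := (lam : ℂ))
    (by rw [Complex.ofReal_re]; linarith [hlam.2]) (by rw [Complex.ofReal_re]; exact hlam.1)
  rw [intervalIntegrable_iff_integrableOn_Ioo_of_le zero_le_one] at h
  have h2 := h.congr_fun (g := fun u => ((hh lam u : ℝ) : ℂ))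
    (fun u hu => hh_cast lam u (Set.Ioo_subset_Icc_self hu)) measurableSet_Ioo
  have h3 := h2.re
  simp only [RCLike.re_to_complex, Complex.ofReal_re] at h3
  exact h3

lemma hh_integral (lam : ℝ) (hlam : lam ∈ Set.Ioo (0 : ℝ) 1) :
    ∫ u in Set.Ioo (0:ℝ) 1, hh lam u = π / Real.sin (lam * π) := by
  have h := ProbabilityTheory.beta_eq_betaIntegralReal (1 - lam) lam (by linarith [hlam.2]) hlam.1
  rw [ProbabilityTheory.beta, sub_add_cancel, Real.Gamma_one, div_one, mul_comm,
    Real.Gamma_mul_Gamma_one_sub, Complex.betaIntegral,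
    intervalIntegral.integral_of_le zero_le_one, integral_Ioc_eq_integral_Ioo,
    setIntegral_congr_fun measurableSet_Ioo
      (fun u hu => hh_cast lam u (Set.Ioo_subset_Icc_self hu)),
    integral_complex_ofReal, Complex.ofReal_re] at h
  rw [← h, mul_comm π]

lemma moebius (lam c : ℝ) (hlam : lam ∈ Set.Ioo (0 : ℝ) 1) (hc : 0 < c) :
    ∫ u in Set.Ioo (0:ℝ) 1, hh lam u / (c + u)
      = c ^ (-lam) * (c + 1) ^ (lam - 1) * (π / Real.sin (lam * π)) := by
  set φ : ℝ → ℝ := fun v => c * v / (c + 1 - v) with hφ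
  have himg : φ '' Set.Ioo (0:ℝ) 1 = Set.Ioo 0 1 := by
    ext u
    constructor
    · rintro ⟨v, ⟨h0, h1⟩, rfl⟩
      have hp : 0 < c + 1 - v := by linarith
      refine ⟨by simp only [hφ]; positivity, ?_⟩
      simp only [hφ]
      rw [div_lt_one hp]
      nlinarith
    · rintro ⟨h0, h1⟩
      have hp : 0 < c + u := by linarith
      refine ⟨(c + 1) * u / (c + u), ⟨by positivity, ?_⟩, ?_⟩
      · rw [div_lt_one hp]; nlinarith
      · simp only [hφ]
        have : c + 1 - (c + 1) * u / (c + u) = c * (c + 1) / (c + u) := by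
          field_simp; ring
        rw [this]
        field_simp
  have hinj : Set.InjOn φ (Set.Ioo 0 1) := by
    rintro a ⟨a0, a1⟩ b ⟨b0, b1⟩ hab
    have ha : c + 1 - a ≠ 0 := by linarith
    have hb : c + 1 - b ≠ 0 := by linarith
    simp only [hφ] at hab
    rw [div_eq_div_iff ha hb] at hab
    have : c * (c + 1) * (a - b) = 0 := by linarith
    have h2 : c * (c + 1) ≠ 0 := by positivity
    have := (mul_eq_zero.mp this).resolve_left h2
    linarith
  have hder : ∀ v ∈ Set.Ioo (0:ℝ) 1,
      HasDerivWithinAt φ (c * (c + 1) / (c + 1 - v) ^ 2) (Set.Ioo 0 1) v := by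
    rintro v ⟨v0, v1⟩
    have hv : c + 1 - v ≠ 0 := by linarith
    have d := ((hasDerivAt_id v).const_mul c).div ((hasDerivAt_id v).const_sub (c + 1)) hv
    refine (d.congr_deriv ?_).hasDerivWithinAt
    simp only [id]
    congr 1
    ring
  have key := integral_image_eq_integral_abs_deriv_smul measurableSet_Ioo hder hinj
    (fun u => hh lam u / (c + u))
  rw [himg] at key
  rw [key, ← hh_integral lam hlam, ← integral_const_mul]
  apply setIntegral_congr_fun measurableSet_Ioo
  rintro v ⟨v0, v1⟩
  have hp : 0 < c + 1 - v := by linarith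
  have h1v : 0 < 1 - v := by linarith
  have e1 : 1 - φ v = (c + 1) * (1 - v) / (c + 1 - v) := by
    simp only [hφ]; field_simp; ring
  have e2 : c + φ v = c * (c + 1) / (c + 1 - v) := by
    simp only [hφ]; field_simp; ring
  have e3 : |c * (c + 1) / (c + 1 - v) ^ 2| = c * (c + 1) / (c + 1 - v) ^ 2 :=
    abs_of_pos (by positivity)
  have e4 : (c + 1 - v) ^ (-lam) * (c + 1 - v) ^ (lam - 1) = (c + 1 - v)⁻¹ := by
    rw [← Real.rpow_add hp, ← Real.rpow_neg_one]; congr 1; ring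
  have hA : (c + 1 - v) ^ (-lam) ≠ 0 := (Real.rpow_pos_of_pos hp _).ne'
  have hB : (c + 1 - v) ^ (lam - 1) ≠ 0 := (Real.rpow_pos_of_pos hp _).ne'
  simp only [smul_eq_mul, e3, e2, hh, e1]
  simp only [hφ]
  rw [Real.div_rpow (by positivity) hp.le, Real.div_rpow (by positivity) hp.le,
    Real.mul_rpow hc.le v0.le, Real.mul_rpow (by positivity) h1v.le, div_mul_div_comm (c ^ (-lam) * v ^ (-lam)), e4]
  field_simp

lemma K_eq (lam c : ℝ) (hlam : lam ∈ Set.Ioo (0 : ℝ) 1) (hc : 0 < c) :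
    Real.sin (lam * π) / π * ∫ u in Set.Ioo (0:ℝ) 1, gg lam u / (c + u)
      = (1 + c) - Real.sin (lam * π) / π * (∫ u in Set.Ioo (0:ℝ) 1, u * hh lam u)
        - (c + 1) ^ lam * c ^ (1 - lam) := by
  have hI := hh_int lam hlam
  have i2 : IntegrableOn (fun u => u * hh lam u) (Set.Ioo 0 1) :=
    (hI.continuousOn_mul_of_subset (K := Set.Icc 0 1) continuousOn_id isCompact_Icc
      measurableSet_Ioo Set.Ioo_subset_Icc_self)
  have i3 : IntegrableOn (fun u => hh lam u / (c + u)) (Set.Ioo 0 1) := by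
    have := (hI.continuousOn_mul_of_subset (K := Set.Icc 0 1) (g := fun u => (c + u)⁻¹)
      (ContinuousOn.inv₀ (by fun_prop) (fun u hu => by linarith [hu.1])) isCompact_Icc
      measurableSet_Ioo Set.Ioo_subset_Icc_self)
    refine this.congr_fun (fun u _ => ?_) measurableSet_Ioo
    simp only [div_eq_mul_inv, mul_comm]
  have e : ∫ u in Set.Ioo (0:ℝ) 1, gg lam u / (c + u)
      = ∫ u in Set.Ioo (0:ℝ) 1, (((1 + c) * hh lam u - u * hh lam u)
          - c * (1 + c) * (hh lam u / (c + u))) := by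
    apply setIntegral_congr_fun measurableSet_Ioo
    intro u hu
    have : c + u ≠ 0 := by linarith [hu.1]
    simp only
    rw [gg_eq lam u hu]
    field_simp
    ring
  have hs : 0 < Real.sin (lam * π) := Real.sin_pos_of_pos_of_lt_pi
    (mul_pos hlam.1 Real.pi_pos) (by nlinarith [hlam.2, Real.pi_pos])
  rw [e, integral_sub (f := fun u => (1 + c) * hh lam u - u * hh lam u)
      ((hI.const_mul _).sub i2) (i3.const_mul _),
    integral_sub (hI.const_mul _) i2, integral_const_mul, integral_const_mul, hh_integral lam hlam,
    moebius lam c hlam hc]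
  have e1 : c ^ (1 - lam) = c * c ^ (-lam) := by
    rw [sub_eq_add_neg, Real.rpow_add hc, Real.rpow_one]
  have e2 : (c + 1) ^ lam = (c + 1) * (c + 1) ^ (lam - 1) := by
    rw [Real.rpow_sub_one (by positivity)]; field_simp
  rw [e1, e2]
  field_simp
  ring

lemma paperF_eq (lam s : ℝ) (hlam : lam ∈ Set.Ioo (0 : ℝ) 1) :
    paperF lam s = s * ∫ u in Set.Ioo (0:ℝ) 1, gg lam u * Real.exp (-u * s) := by
  have hI := hh_int lam hlam
  have hg := gg_cont lam hlam
  have i1 : IntegrableOn (fun u => (1 - u - lam) * hh lam u * Real.exp (-u * s)) (Set.Ioo 0 1) := by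
    have := (hI.continuousOn_mul_of_subset (K := Set.Icc 0 1)
      (g := fun u => (1 - u - lam) * Real.exp (-u * s))
      (by fun_prop) isCompact_Icc
      measurableSet_Ioo Set.Ioo_subset_Icc_self)
    refine this.congr_fun (fun u _ => ?_) measurableSet_Ioo
    simp only; ring
  have i2 : IntegrableOn (fun u => gg lam u * Real.exp (-u * s)) (Set.Ioo 0 1) :=
    ((by fun_prop : Continuous (fun u => gg lam u * Real.exp (-u * s))).integrableOn_Icc).mono_set
      Set.Ioo_subset_Icc_self
  have ftc := intervalIntegral.integral_eq_sub_of_hasDerivAt_of_le (a := 0) (b := 1)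
    (f := fun u => gg lam u * Real.exp (-u * s))
    (f' := fun u => (1 - u - lam) * hh lam u * Real.exp (-u * s)
      - s * (gg lam u * Real.exp (-u * s))) zero_le_one
    (by fun_prop)
    (by
      intro u hu
      have d2 : HasDerivAt (fun u : ℝ => Real.exp (-u * s)) (Real.exp (-u * s) * (-1 * s)) u :=
        (((hasDerivAt_id u).neg).mul_const s).exp
      refine ((gg_deriv lam u hu).mul d2).congr_deriv ?_
      ring)
    (by
      rw [intervalIntegrable_iff_integrableOn_Ioo_of_le zero_le_one]
      exact i1.sub (i2.const_mul s))
  have b1 : gg lam 1 = 0 := by simp [gg, Real.zero_rpow hlam.1.ne']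
  have b0 : gg lam 0 = 0 := by
    simp [gg, Real.zero_rpow (by linarith [hlam.2] : (1 - lam) ≠ 0)]
  rw [intervalIntegral.integral_of_le zero_le_one, integral_Ioc_eq_integral_Ioo,
    integral_sub i1 (i2.const_mul s), integral_const_mul, b1, b0] at ftc
  rw [paperF, intervalIntegral.integral_of_le zero_le_one, integral_Ioc_eq_integral_Ioo]
  rw [setIntegral_congr_fun measurableSet_Ioo
    (g := fun u => (1 - u - lam) * hh lam u * Real.exp (-u * s))
    (fun u hu => by simp only; rw [w_eq lam u hu])]
  linarith

lemma prod_int (lam d z : ℝ) (hlam : lam ∈ Set.Ioo (0 : ℝ) 1) (hd : 0 < d) (hz : 0 < z) :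
    Integrable (Function.uncurry (fun s u : ℝ => gg lam u * Real.exp (-(z + u * d) * s)))
      ((volume.restrict (Set.Ioi (0:ℝ))).prod (volume.restrict (Set.Ioo (0:ℝ) 1))) := by
  have hg := gg_cont lam hlam
  have ig : IntegrableOn (gg lam) (Set.Ioo 0 1) :=
    hg.integrableOn_Icc.mono_set Set.Ioo_subset_Icc_self
  have ie := exp_neg_integrableOn_Ioi 0 hz
  refine (ie.mul_prod ig).mono ?_ ?_
  · apply Continuous.aestronglyMeasurable
    simp only [Function.uncurry_def]
    fun_prop
  · rw [Measure.prod_restrict]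
    refine (ae_restrict_iff' (measurableSet_Ioi.prod measurableSet_Ioo)).mpr (ae_of_all _ ?_)
    rintro ⟨s, u⟩ ⟨hs, hu⟩
    simp only [Function.uncurry_apply_pair, norm_mul, Real.norm_eq_abs, Real.abs_exp]
    rw [mul_comm]
    apply mul_le_mul_of_nonneg_right _ (abs_nonneg _)
    apply Real.exp_le_exp.mpr
    have : 0 ≤ u * d * s := by
      have h1 : 0 < u := hu.1
      have h2 : 0 < s := hs
      positivity
    linarith

lemma fub (lam d z : ℝ) (hlam : lam ∈ Set.Ioo (0 : ℝ) 1) (hd : 0 < d) (hz : 0 < z) :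
    d * ∫ s in Set.Ioi (0:ℝ), ∫ u in Set.Ioo (0:ℝ) 1, gg lam u * Real.exp (-(z + u * d) * s)
      = ∫ u in Set.Ioo (0:ℝ) 1, gg lam u / (z / d + u) := by
  rw [integral_integral_swap (prod_int lam d z hlam hd hz), ← integral_const_mul]
  apply setIntegral_congr_fun measurableSet_Ioo
  intro u hu
  have hu0 : 0 < u := hu.1
  have : 0 < z + u * d := by positivity
  simp only
  rw [integral_const_mul, integral_exp_mul_Ioi (by linarith)]
  simp only [mul_zero, Real.exp_zero]
  field_simp

lemma scale (lam d z : ℝ) (hd : 0 < d) (hz : 0 < z) :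
    d * ((z / d + 1) ^ lam * (z / d) ^ (1 - lam)) = (z + d) ^ lam * z ^ (1 - lam) := by
  have : z / d + 1 = (z + d) / d := by field_simp
  rw [this, Real.div_rpow (by positivity) hd.le, Real.div_rpow hz.le hd.le, div_mul_div_comm,
    ← Real.rpow_add hd]
  simp only [add_sub_cancel, Real.rpow_one]
  field_simp

theorem weighted_geometric_mean_integral_representation
    (lam x y : ℝ) (hlam : lam ∈ Set.Ioo (0 : ℝ) 1)
    (hxy : x > y) (hy : 0 < y) (t : ℝ) (ht : -y < t) :
    (x + t) ^ lam * (y + t) ^ (1 - lam) =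
      x ^ lam * y ^ (1 - lam) + t +
        Real.sin (lam * π) / π * (x - y) *
          ∫ s in Set.Ioi (0 : ℝ),
            paperF lam ((x - y) * s) / s * Real.exp (-s * y) *
              (1 - Real.exp (-s * t)) := by
  obtain ⟨d, rfl⟩ : ∃ d, x = y + d := ⟨x - y, by ring⟩
  have hd : 0 < d := by linarith
  have hz : 0 < y + t := by linarith
  have e0 : y + d - y = d := by ring
  rw [e0]
  have main : ∫ s in Set.Ioi (0 : ℝ),
            paperF lam (d * s) / s * Real.exp (-s * y) * (1 - Real.exp (-s * t))
      = (∫ u in Set.Ioo (0:ℝ) 1, gg lam u / (y / d + u))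
        - ∫ u in Set.Ioo (0:ℝ) 1, gg lam u / ((y + t) / d + u) := by
    have q1 : Integrable (fun s : ℝ => ∫ u in Set.Ioo (0:ℝ) 1,
        gg lam u * Real.exp (-(y + u * d) * s)) (volume.restrict (Set.Ioi (0:ℝ))) :=
      (prod_int lam d y hlam hd hy).integral_prod_left
    have q2 : Integrable (fun s : ℝ => ∫ u in Set.Ioo (0:ℝ) 1,
        gg lam u * Real.exp (-(y + t + u * d) * s)) (volume.restrict (Set.Ioi (0:ℝ))) :=
      (prod_int lam d (y + t) hlam hd hz).integral_prod_left
    rw [← fub lam d y hlam hd hy, ← fub lam d (y + t) hlam hd hz, ← mul_sub,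
      ← integral_sub q1 q2, ← integral_const_mul]
    apply setIntegral_congr_fun measurableSet_Ioi
    intro s hs
    have hs0 : s ≠ 0 := (ne_of_gt hs)
    have a (z : ℝ) : ∫ u in Set.Ioo (0:ℝ) 1, gg lam u * Real.exp (-(z + u * d) * s)
        = Real.exp (-s * z) * ∫ u in Set.Ioo (0:ℝ) 1, gg lam u * Real.exp (-u * (d * s)) := by
      rw [← integral_const_mul]
      congr 1
      ext u
      have : -(z + u * d) * s = -s * z + -u * (d * s) := by ring
      rw [this, Real.exp_add]; ring
    have b : Real.exp (-s * (y + t)) = Real.exp (-s * y) * Real.exp (-s * t) := by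
      rw [← Real.exp_add]; congr 1; ring
    simp only
    rw [a, a, paperF_eq lam _ hlam, b]
    field_simp
  rw [main]
  have k1 := K_eq lam (y / d) hlam (by positivity)
  have k2 := K_eq lam ((y + t) / d) hlam (by positivity)
  have s1 := scale lam d y hd hy
  have s2 := scale lam d (y + t) hd hz
  have e3 : y + d + t = y + t + d := by ring
  rw [e3, ← s1, ← s2]
  have f1 : d * (y / d) = y := by field_simp
  have f2 : d * ((y + t) / d) = y + t := by field_simp
  linear_combination (-d) * k1 + d * k2 + f2 - f1
end

section
/- Let λ ∈ (0, 1) and x > y > 0. Then the difference between the weighted arithmetic and weighted geometric means has the integral representation (λx + (1−λ)y) − x^λ y^{1−λ} = (sin(λπ)/π) · (x−y) · ∫₀^∞ (F(λ, (x−y)s)/s) · e^{−sy} ds, where F(λ,s) = ∫₀¹ (1/u − 1)^λ (1 − λ/(1−u)) e^{−us} du. -/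
open Real MeasureTheory

open Set in
lemma aux_beta_integrable {a b : ℝ} (ha : 0 < a) (hb : 0 < b) :
    IntegrableOn (fun u : ℝ => u ^ (a - 1) * (1 - u) ^ (b - 1)) (Ioo 0 1) := by
  have h := Complex.betaIntegral_convergent (u := a) (v := b) (by simpa) (by simpa)
  rw [intervalIntegrable_iff_integrableOn_Ioo_of_le (by simp)] at h
  refine (Integrable.re h).congr ?_
  refine (ae_restrict_iff' measurableSet_Ioo).2 (Filter.Eventually.of_forall fun x hx => ?_)
  simp only
  norm_cast
  rw [← Complex.ofReal_cpow hx.1.le, ← Complex.ofReal_cpow (by linarith [hx.2])]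
  norm_cast

open Set in
lemma aux_beta_s14 {a b : ℝ} (ha : 0 < a) (hb : 0 < b) :
    ∫ u in Ioo (0:ℝ) 1, u ^ (a - 1) * (1 - u) ^ (b - 1)
      = Real.Gamma a * Real.Gamma b / Real.Gamma (a + b) := by
  have h := Complex.betaIntegral_convergent (u := a) (v := b) (by simpa) (by simpa)
  rw [intervalIntegrable_iff_integrableOn_Ioo_of_le (by simp)] at h
  have h2 := ProbabilityTheory.beta_eq_betaIntegralReal a b ha hb
  rw [ProbabilityTheory.beta] at h2
  rw [h2, Complex.betaIntegral, intervalIntegral.integral_of_le (by norm_num),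
    integral_Ioc_eq_integral_Ioo, ← RCLike.re_to_complex, ← integral_re h]
  refine setIntegral_congr_fun measurableSet_Ioo fun x hx => ?_
  try simp only
  norm_cast
  rw [← Complex.ofReal_cpow hx.1.le, ← Complex.ofReal_cpow (by linarith [hx.2])]
  norm_cast

/-- weight -/
noncomputable def auxW (l u : ℝ) : ℝ := u ^ (-l) * (1 - u) ^ (l - 1)

open Set in
lemma auxW_int {l : ℝ} (h0 : 0 < l) (h1 : l < 1) : IntegrableOn (auxW l) (Ioo 0 1) := by
  have := aux_beta_integrable (a := 1 - l) (b := l) (by linarith) h0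
  refine this.congr_fun (fun u hu => ?_) measurableSet_Ioo
  simp only [auxW]
  congr 2; ring

open Set in
lemma auxW_integral {l : ℝ} (h0 : 0 < l) (h1 : l < 1) :
    ∫ u in Ioo (0:ℝ) 1, auxW l u = π / Real.sin (π * l) := by
  have := aux_beta_s14 (a := 1 - l) (b := l) (by linarith) h0
  rw [← Real.Gamma_mul_Gamma_one_sub l]
  rw [show 1 - l + l = 1 by ring, Real.Gamma_one, div_one, mul_comm] at this
  rw [← this]
  refine setIntegral_congr_fun measurableSet_Ioo (fun u hu => ?_)
  simp only [auxW]
  congr 2; ring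

open Set in
lemma auxW_integral' {l : ℝ} (h0 : 0 < l) (h1 : l < 1) :
    ∫ u in Ioo (0:ℝ) 1, u * auxW l u = (1 - l) * (π / Real.sin (π * l)) := by
  have := aux_beta_s14 (a := 2 - l) (b := l) (by linarith) h0
  rw [← Real.Gamma_mul_Gamma_one_sub l]
  rw [show 2 - l + l = 2 by ring, Real.Gamma_two, div_one, show 2 - l = (1 - l) + 1 by ring,
    Real.Gamma_add_one (by linarith)] at this
  rw [show (1 - l) * (Real.Gamma l * Real.Gamma (1 - l))
    = (1 - l) * Real.Gamma (1 - l) * Real.Gamma l by ring, ← this]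
  refine setIntegral_congr_fun measurableSet_Ioo (fun u hu => ?_)
  simp only [auxW]
  rw [show 1 - l + 1 - 1 = -l + 1 by ring, Real.rpow_add_one hu.1.ne']
  ring

lemma auxW_mul {l u : ℝ} (hu : u ∈ Set.Ioo (0:ℝ) 1) :
    u ^ (1 - l) * (1 - u) ^ l = auxW l u * (u * (1 - u)) := by
  have h1 : 0 < 1 - u := by linarith [hu.2]
  rw [auxW, show 1 - l = -l + 1 by ring, Real.rpow_add_one hu.1.ne', Real.rpow_sub_one h1.ne']
  field_simp

open Set in
lemma auxL_integral {l r : ℝ} (h0 : 0 < l) (h1 : l < 1) (hr : 0 < r) :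
    ∫ u in Ioo (0:ℝ) 1, auxW l u / (u + r)
      = r ^ (-l) * (1 + r) ^ (l - 1) * (π / Real.sin (π * l)) := by
  have himg : (fun t : ℝ => r * t / (1 + r - t)) '' Ioo 0 1 = Ioo 0 1 := by
    ext u
    constructor
    · rintro ⟨t, ht, rfl⟩
      have : 0 < 1 + r - t := by linarith [ht.2]
      have := ht.1
      refine ⟨by positivity, ?_⟩
      simp only
      rw [div_lt_one (by assumption)]
      nlinarith [ht.2]
    · intro hu
      have : 0 < u + r := by linarith [hu.1]
      have := hu.1
      refine ⟨(1 + r) * u / (u + r), ⟨by positivity, ?_⟩, ?_⟩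
      · rw [div_lt_one (by assumption)]
        nlinarith [hu.2]
      · simp only
        have : 1 + r - (1 + r) * u / (u + r) = r * (1 + r) / (u + r) := by
          field_simp; ring
        rw [this]
        field_simp
  have hinj : InjOn (fun t : ℝ => r * t / (1 + r - t)) (Ioo 0 1) := by
    intro a ha b hb hab
    have h1 : 0 < 1 + r - a := by linarith [ha.2]
    have h2 : 0 < 1 + r - b := by linarith [hb.2]
    simp only at hab
    rw [div_eq_div_iff h1.ne' h2.ne'] at hab
    have : (r * (1 + r)) * (a - b) = 0 := by linarith
    have h3 : r * (1 + r) ≠ 0 := by positivity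
    have := (mul_eq_zero.1 this).resolve_left h3
    linarith
  have hder : ∀ t ∈ Ioo (0:ℝ) 1, HasDerivWithinAt (fun t : ℝ => r * t / (1 + r - t))
      (r * (1 + r) / (1 + r - t) ^ 2) (Ioo 0 1) t := by
    intro t ht
    have h1 : 0 < 1 + r - t := by linarith [ht.2]
    have := ((hasDerivAt_id t).const_mul r).div ((hasDerivAt_id t).const_sub (1 + r)) h1.ne'
    refine (this.congr_deriv ?_).hasDerivWithinAt
    simp only [id]
    congr 1; ring
  have key := integral_image_eq_integral_abs_deriv_smul measurableSet_Ioo hder hinj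
    (fun u => auxW l u / (u + r))
  rw [himg] at key
  rw [key, ← auxW_integral h0 h1, ← integral_const_mul]
  refine setIntegral_congr_fun measurableSet_Ioo (fun t ht => ?_)
  have hd : 0 < 1 + r - t := by linarith [ht.2]
  have ht0 := ht.1
  have ht1 : 0 < 1 - t := by linarith [ht.2]
  have e1 : 1 - r * t / (1 + r - t) = (1 + r) * (1 - t) / (1 + r - t) := by
    field_simp; ring
  have e2 : r * t / (1 + r - t) + r = r * (1 + r) / (1 + r - t) := by
    field_simp; ring
  simp only [auxW, smul_eq_mul]
  rw [e1, e2, abs_of_pos (by positivity), Real.div_rpow (by positivity) hd.le,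
    Real.div_rpow (by positivity) hd.le, Real.mul_rpow hr.le ht0.le,
    Real.mul_rpow (by positivity) ht1.le]
  have e3 : (1 + r - t) ^ (l - 1) = ((1 + r - t) ^ (-l))⁻¹ / (1 + r - t) := by
    rw [Real.rpow_sub_one hd.ne', Real.rpow_neg hd.le, inv_inv]
  rw [e3]
  have : 0 < (1 + r - t) ^ (-l) := by positivity
  field_simp

open Set in
lemma auxJ_integral {l r : ℝ} (h0 : 0 < l) (h1 : l < 1) (hr : 0 < r) :
    ∫ u in Ioo (0:ℝ) 1, u ^ (1 - l) * (1 - u) ^ l / (u + r)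
      = (π / Real.sin (π * l)) * (l + r - (1 + r) ^ l * r ^ (1 - l)) := by
  have hW := auxW_int h0 h1
  have hW1 : IntegrableOn (fun u => u * auxW l u) (Ioo 0 1) := by
    refine Integrable.bdd_mul (c := 1) hW (by fun_prop) ?_
    refine (ae_restrict_iff' measurableSet_Ioo).2 (Filter.Eventually.of_forall fun x hx => ?_)
    rw [Real.norm_eq_abs, abs_of_pos hx.1]; exact hx.2.le
  have hW2 : IntegrableOn (fun u => auxW l u / (u + r)) (Ioo 0 1) := by
    simp_rw [div_eq_inv_mul]
    refine Integrable.bdd_mul (c := r⁻¹) hW ?_ ?_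
    · exact Measurable.aestronglyMeasurable (by fun_prop)
    refine (ae_restrict_iff' measurableSet_Ioo).2 (Filter.Eventually.of_forall fun x hx => ?_)
    have := hx.1
    rw [Real.norm_eq_abs, abs_of_pos (by positivity)]
    gcongr; linarith
  have : ∫ u in Ioo (0:ℝ) 1, u ^ (1 - l) * (1 - u) ^ l / (u + r)
      = ∫ u in Ioo (0:ℝ) 1,
        ((1 + r) * auxW l u - u * auxW l u - (r * (1 + r)) * (auxW l u / (u + r))) := by
    refine setIntegral_congr_fun measurableSet_Ioo (fun u hu => ?_)
    try simp only
    rw [auxW_mul hu]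
    have : 0 < u + r := by linarith [hu.1]
    field_simp; ring
  have hs : IntegrableOn (fun u => (1 + r) * auxW l u - u * auxW l u) (Ioo 0 1) :=
    (hW.const_mul _).sub hW1
  rw [this, integral_sub hs (hW2.const_mul _),
    integral_sub (hW.const_mul _) hW1, integral_const_mul, integral_const_mul,
    auxW_integral h0 h1, auxW_integral' h0 h1, auxL_integral h0 h1 hr]
  have h1r : 0 < 1 + r := by linarith
  rw [show 1 - l = -l + 1 by ring, Real.rpow_add_one hr.ne', Real.rpow_sub_one h1r.ne']
  field_simp
  ring

open Set in
lemma paperF_eq_s14 {l : ℝ} (h0 : 0 < l) (h1 : l < 1) (s : ℝ) :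
    paperF l s = s * ∫ u in Ioo (0:ℝ) 1, u ^ (1 - l) * (1 - u) ^ l * Real.exp (-u * s) := by
  have hW := auxW_int h0 h1
  have hcont : Continuous (fun u : ℝ => u ^ (1 - l) * (1 - u) ^ l * Real.exp (-u * s)) := by
    have a1 : Continuous (fun u : ℝ => u ^ (1 - l)) :=
      Real.continuous_rpow_const (by linarith)
    have a2 : Continuous (fun u : ℝ => (1 - u) ^ l) :=
      (Real.continuous_rpow_const h0.le).comp (by fun_prop)
    fun_prop
  have hint1 : IntegrableOn (fun u : ℝ => u ^ (1 - l) * (1 - u) ^ l * Real.exp (-u * s))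
      (Ioo 0 1) := (hcont.integrableOn_Icc).mono_set Ioo_subset_Icc_self
  have hint2 : IntegrableOn (fun u : ℝ => ((1 - u - l) * Real.exp (-u * s)) * auxW l u)
      (Ioo 0 1) := by
    have hc : Continuous (fun u : ℝ => ((1 - u - l) * Real.exp (-u * s))) := by fun_prop
    obtain ⟨c, hc'⟩ := (isCompact_Icc (a := (0:ℝ)) (b := 1)).exists_bound_of_continuousOn
      hc.continuousOn
    refine Integrable.bdd_mul (c := c) hW hc.aestronglyMeasurable ?_
    exact (ae_restrict_iff' measurableSet_Ioo).2
      (Filter.Eventually.of_forall fun x hx => hc' x ⟨hx.1.le, hx.2.le⟩)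
  have hftc := intervalIntegral.integral_eq_sub_of_hasDerivAt_of_le (a := (0:ℝ)) (b := 1)
    zero_le_one
    (f := fun u : ℝ => u ^ (1 - l) * (1 - u) ^ l * Real.exp (-u * s))
    (f' := fun u : ℝ => ((1 - u - l) * Real.exp (-u * s)) * auxW l u
      - s * (u ^ (1 - l) * (1 - u) ^ l * Real.exp (-u * s)))
    hcont.continuousOn (by
      intro u hu
      have hu0 := hu.1
      have hu1 : 0 < 1 - u := by linarith [hu.2]
      have d1 := Real.hasDerivAt_rpow_const (x := u) (p := 1 - l) (Or.inl hu0.ne')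
      have d2 := ((hasDerivAt_id u).const_sub 1).rpow_const (p := l) (Or.inl hu1.ne')
      have d3 := (((hasDerivAt_id u).neg).mul_const s).exp
      refine ((d1.mul d2).mul d3).congr_deriv ?_
      simp only [Pi.mul_apply, Pi.neg_apply, id, auxW]
      rw [show 1 - l - 1 = -l by ring, show 1 - l = -l + 1 by ring,
        Real.rpow_add_one hu0.ne', Real.rpow_sub_one hu1.ne']
      field_simp
      ring) (by
      rw [intervalIntegrable_iff_integrableOn_Ioo_of_le zero_le_one]
      exact hint2.sub (hint1.const_mul s))
  rw [intervalIntegral.integral_of_le zero_le_one, integral_Ioc_eq_integral_Ioo,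
    integral_sub hint2 (hint1.const_mul s), integral_const_mul] at hftc
  simp only [sub_self, Real.zero_rpow h0.ne', Real.zero_rpow (show 1 - l ≠ 0 by linarith),
    zero_mul, mul_zero] at hftc
  rw [← sub_eq_zero.1 hftc, paperF, intervalIntegral.integral_of_le zero_le_one,
    integral_Ioc_eq_integral_Ioo]
  refine setIntegral_congr_fun measurableSet_Ioo (fun u hu => ?_)
  have hu0 := hu.1
  have hu1 : 0 < 1 - u := by linarith [hu.2]
  simp only [auxW]
  rw [show 1 / u - 1 = (1 - u) / u by field_simp, Real.div_rpow hu1.le hu0.le,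
    Real.rpow_neg hu0.le, Real.rpow_sub_one hu1.ne']
  field_simp

open Set in
theorem weighted_AM_GM_integral_representation
    (lam x y : ℝ) (hlam : lam ∈ Set.Ioo (0 : ℝ) 1)
    (hxy : x > y) (hy : 0 < y) :
    (lam * x + (1 - lam) * y) - x ^ lam * y ^ (1 - lam) =
      Real.sin (lam * π) / π * (x - y) *
        ∫ s in Set.Ioi (0 : ℝ),
          paperF lam ((x - y) * s) / s * Real.exp (-s * y) := by
  obtain ⟨h0, h1⟩ := hlam
  obtain ⟨D, hD⟩ : ∃ D, D = x - y := ⟨_, rfl⟩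
  have hD0 : 0 < D := by linarith
  rw [← hD]
  have hcont : Continuous (fun u : ℝ => u ^ (1 - lam) * (1 - u) ^ lam) := by
    have a1 : Continuous (fun u : ℝ => u ^ (1 - lam)) :=
      Real.continuous_rpow_const (by linarith)
    have a2 : Continuous (fun u : ℝ => (1 - u) ^ lam) :=
      (Real.continuous_rpow_const h0.le).comp (by fun_prop)
    fun_prop
  have hint : IntegrableOn (fun u : ℝ => u ^ (1 - lam) * (1 - u) ^ lam) (Ioo 0 1) :=
    (hcont.integrableOn_Icc).mono_set Ioo_subset_Icc_self
  have hE : IntegrableOn (fun s : ℝ => Real.exp (-y * s)) (Ioi 0) :=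
    integrableOn_exp_mul_Ioi (by linarith) 0
  have step1 : ∫ s in Set.Ioi (0 : ℝ), paperF lam (D * s) / s * Real.exp (-s * y)
      = ∫ s in Ioi (0:ℝ), ∫ u in Ioo (0:ℝ) 1,
        D * (u ^ (1 - lam) * (1 - u) ^ lam * Real.exp (-(y + u * D) * s)) := by
    refine setIntegral_congr_fun measurableSet_Ioi (fun s hs => ?_)
    have hs : 0 < s := hs
    try simp only
    rw [paperF_eq_s14 h0 h1, integral_const_mul]
    rw [show D * s * (∫ u in Ioo (0:ℝ) 1, u ^ (1 - lam) * (1 - u) ^ lam * Real.exp (-u * (D * s)))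
      / s * Real.exp (-s * y) = D * ((∫ u in Ioo (0:ℝ) 1,
        u ^ (1 - lam) * (1 - u) ^ lam * Real.exp (-u * (D * s))) * Real.exp (-s * y)) by
        field_simp, ← integral_mul_const]
    congr 1
    refine setIntegral_congr_fun measurableSet_Ioo (fun u hu => ?_)
    try simp only
    rw [mul_assoc, ← Real.exp_add]
    congr 2; ring
  have hprod : Integrable (Function.uncurry fun (s u : ℝ) =>
      D * (u ^ (1 - lam) * (1 - u) ^ lam * Real.exp (-(y + u * D) * s)))
      ((volume.restrict (Ioi (0:ℝ))).prod (volume.restrict (Ioo (0:ℝ) 1))) := by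
    refine ((Integrable.mul_prod hE hint).const_mul D).mono' ?_ ?_
    · refine Continuous.aestronglyMeasurable ?_
      have := hcont.comp (continuous_snd (X := ℝ) (Y := ℝ))
      simp only [Function.comp_def] at this
      unfold Function.uncurry
      fun_prop
    · rw [Measure.prod_restrict]
      refine (ae_restrict_iff' (measurableSet_Ioi.prod measurableSet_Ioo)).2
        (Filter.Eventually.of_forall fun p hp => ?_)
      obtain ⟨s, u⟩ := p
      have hs : 0 < s := hp.1
      have hu0 : 0 < u := hp.2.1
      have hu1 : 0 < 1 - u := by linarith [hp.2.2]
      simp only [Function.uncurry]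
      rw [Real.norm_eq_abs, abs_of_pos (by positivity), mul_comm (Real.exp _)]
      gcongr
      have : 0 < u * D := by positivity
      linarith
  have hr : 0 < y / D := by positivity
  have step2 : ∫ u in Ioo (0:ℝ) 1, ∫ s in Ioi (0:ℝ),
        D * (u ^ (1 - lam) * (1 - u) ^ lam * Real.exp (-(y + u * D) * s))
      = ∫ u in Ioo (0:ℝ) 1, u ^ (1 - lam) * (1 - u) ^ lam / (u + y / D) := by
    refine setIntegral_congr_fun measurableSet_Ioo (fun u hu => ?_)
    have hu0 := hu.1
    have : 0 < y + u * D := by positivity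
    try simp only
    rw [integral_const_mul, integral_const_mul, integral_exp_mul_Ioi (by linarith)]
    simp only [mul_zero, Real.exp_zero]
    have : 0 < u + y / D := by positivity
    have e : u + y / D = (y + u * D) / D := by field_simp; ring
    rw [e]
    field_simp
  rw [step1, integral_integral_swap hprod, step2, auxJ_integral h0 h1 hr]
  have hx : x = D + y := by linarith
  have hsin : 0 < Real.sin (π * lam) :=
    Real.sin_pos_of_pos_of_lt_pi (by positivity) (by nlinarith [Real.pi_pos])
  have e1 : 1 + y / D = x / D := by rw [hx]; field_simp
  rw [e1, Real.div_rpow (by linarith) hD0.le, Real.div_rpow hy.le hD0.le, mul_comm lam π]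
  have e2 : D ^ (1 - lam) = D / D ^ lam := by rw [Real.rpow_sub hD0, Real.rpow_one]
  rw [e2]
  have hDl : 0 < D ^ lam := by positivity
  have hpi := Real.pi_pos
  generalize Real.sin (π * lam) = q at hsin ⊢
  field_simp
  rw [hx]; ring
end

section
/- For x, y > 0 with x ≠ y, the logarithmic mean L_{x,y}(t) = (x − y)/(ln(x+t) − ln(y+t)) · 1, i.e., L_{x,y}(t) = ((x+t) − (y+t))/(ln(x+t) − ln(y+t)), is a Bernstein function of t on (−min{x,y}, ∞): it is nonnegative, has derivatives of all orders, and its first derivative is completely monotonic on (−min{x,y}, ∞). -/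
open Real

noncomputable def PwSum (a : ℕ → ℝ) (v : ℝ) : ℝ := ∑' k, a k * v ^ k

def Good (a : ℕ → ℝ) : Prop := (∀ k, 0 ≤ a k) ∧ ∀ r : ℝ, Summable fun k => a k * r ^ k

def dC (a : ℕ → ℝ) : ℕ → ℝ := fun k => a (k + 1) * (k + 1)

lemma term_bound {a : ℕ → ℝ} (ha : Good a) {R z : ℝ} (hR : 1 ≤ R) (hz : |z| ≤ R) (k : ℕ) :
    ‖a k * (k * z ^ (k - 1))‖ ≤ a k * (2 * R) ^ k := by
  have h0 := ha.1 k
  rw [norm_mul, norm_mul, norm_pow, Real.norm_of_nonneg h0, Real.norm_eq_abs, Real.norm_eq_abs,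
    Nat.abs_cast, mul_pow]
  have h1 : (k : ℝ) ≤ 2 ^ k := by exact_mod_cast (Nat.lt_two_pow_self (n := k)).le
  have h2 : |z| ^ (k - 1) ≤ R ^ k :=
    (pow_le_pow_left₀ (abs_nonneg z) hz _).trans (pow_le_pow_right₀ hR (Nat.sub_le _ _))
  gcongr

lemma summ_der {a : ℕ → ℝ} (ha : Good a) (z : ℝ) :
    Summable fun k : ℕ => a k * (k * z ^ (k - 1)) :=
  Summable.of_norm_bounded (ha.2 (2 * (|z| + 1)))
    (fun k => term_bound ha (by linarith [abs_nonneg z]) (by linarith) k)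

lemma good_dC {a : ℕ → ℝ} (ha : Good a) : Good (dC a) := by
  refine ⟨fun k => mul_nonneg (ha.1 _) (by positivity), fun r => ?_⟩
  have := (summable_nat_add_iff 1).2 (summ_der ha r)
  refine this.congr fun k => ?_
  simp [dC]; ring

lemma hasDerivAt_PwSum {a : ℕ → ℝ} (ha : Good a) (v : ℝ) :
    HasDerivAt (PwSum a) (PwSum (dC a) v) v := by
  have hR : (1 : ℝ) ≤ |v| + 1 := by linarith [abs_nonneg v]
  have hv : v ∈ Metric.ball (0 : ℝ) (|v| + 1) := by simp
  have h := hasDerivAt_tsum_of_isPreconnected (g := fun k z => a k * z ^ k)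
    (g' := fun k z => a k * (k * z ^ (k - 1))) (ha.2 (2 * (|v| + 1)))
    (Metric.isOpen_ball (x := (0 : ℝ)) (ε := |v| + 1))
    (convex_ball (0 : ℝ) (|v| + 1)).isPreconnected
    (fun k z _ => (hasDerivAt_pow k z).const_mul (a k))
    (fun k z hz => term_bound ha hR (by simpa using (le_of_lt (by simpa using hz))) k)
    hv (ha.2 v) hv
  have e : ∑' k : ℕ, a k * (k * v ^ (k - 1)) = PwSum (dC a) v := by
    rw [(summ_der ha v).tsum_eq_zero_add]
    simp only [Nat.cast_zero, zero_mul, mul_zero, zero_add, PwSum, dC]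
    refine tsum_congr fun k => ?_
    simp; ring
  rw [← e]
  exact h

lemma contDiff_PwSum (n : ℕ) : ∀ {a : ℕ → ℝ}, Good a → ContDiff ℝ n (PwSum a) := by
  induction n with
  | zero =>
    intro a ha
    exact contDiff_zero.2 (continuous_iff_continuousAt.2
      fun v => (hasDerivAt_PwSum ha v).continuousAt)
  | succ n ih =>
    intro a ha
    push_cast
    rw [contDiff_succ_iff_deriv]
    refine ⟨fun v => (hasDerivAt_PwSum ha v).differentiableAt, by simp, ?_⟩
    rw [show deriv (PwSum a) = PwSum (dC a) from funext fun v => (hasDerivAt_PwSum ha v).deriv]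
    exact ih (good_dC ha)

lemma cm_comp {v w : ℝ → ℝ} {I : Set ℝ} (hI : IsOpen I)
    (hv0 : ∀ t ∈ I, 0 ≤ v t) (hv : ∀ t ∈ I, HasDerivAt v (- w t) t)
    (hvs : ∀ n : ℕ, ∀ t ∈ I, ContDiffAt ℝ n v t)
    (hws : ∀ n : ℕ, ∀ t ∈ I, ContDiffAt ℝ n w t)
    (hw : ∀ n : ℕ, ∀ t ∈ I, 0 ≤ (-1 : ℝ) ^ n * iteratedDeriv n w t) (n : ℕ) :
    ∀ {a : ℕ → ℝ}, Good a → ∀ t ∈ I,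
      0 ≤ (-1 : ℝ) ^ n * iteratedDeriv n (fun t => PwSum a (v t)) t := by
  induction n using Nat.strong_induction_on with
  | _ n ih =>
  intro a ha t ht
  cases n with
  | zero =>
    simp only [pow_zero, one_mul, iteratedDeriv_zero]
    exact tsum_nonneg fun k => mul_nonneg (ha.1 k) (pow_nonneg (hv0 t ht) k)
  | succ n =>
    have e : deriv (fun t => PwSum a (v t)) =ᶠ[nhds t]
        -((fun t => PwSum (dC a) (v t)) * w) := by
      filter_upwards [hI.mem_nhds ht] with s hs
      have := ((hasDerivAt_PwSum ha (v s)).comp s (hv s hs)).deriv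
      simp only [Function.comp_def] at this
      rw [this]; simp
    rw [iteratedDeriv_succ', e.iteratedDeriv_eq, iteratedDeriv_neg, iteratedDeriv_mul
      (f := fun t => PwSum (dC a) (v t)) ((contDiff_PwSum n (good_dC ha)).contDiffAt.comp t (hvs n t ht)) (hws n t ht)]
    rw [pow_succ, mul_assoc, neg_one_mul, neg_neg, Finset.mul_sum]
    refine Finset.sum_nonneg fun i hi => ?_
    have hi' : i ≤ n := Nat.lt_succ_iff.1 (Finset.mem_range.1 hi)
    have h1 := ih i (by omega) (good_dC ha) t ht
    have h2 := hw (n - i) t ht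
    have h3 : (-1 : ℝ) ^ n = (-1) ^ i * (-1) ^ (n - i) := by
      rw [← pow_add]; congr 1; omega
    rw [h3]
    have := mul_nonneg (mul_nonneg (Nat.cast_nonneg (α := ℝ) (n.choose i)) h1) h2
    convert this using 1
    ring

noncomputable def cf : ℕ → ℝ := fun k => (1 + (-1) ^ k) / (k + 2).factorial

lemma cf_hasSum (v : ℝ) :
    HasSum (fun k => cf k * v ^ (k + 2)) (exp v + exp (-v) - 2) := by
  have h1 : HasSum (fun k : ℕ => v ^ k / k.factorial) (exp v) := by
    rw [Real.exp_eq_exp_ℝ]; exact NormedSpace.expSeries_div_hasSum_exp v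
  have h2 : HasSum (fun k : ℕ => (-v) ^ k / k.factorial) (exp (-v)) := by
    rw [Real.exp_eq_exp_ℝ]; exact NormedSpace.expSeries_div_hasSum_exp (-v)
  have h := (hasSum_nat_add_iff' 2).2 (h1.add h2)
  have e : (fun k : ℕ => cf k * v ^ (k + 2)) = fun k : ℕ =>
      v ^ (k + 2) / ((k + 2).factorial : ℝ) + (-v) ^ (k + 2) / ((k + 2).factorial : ℝ) := by
    funext k
    rw [show cf k = (1 + (-1) ^ k) / ((k + 2).factorial : ℝ) from rfl, neg_pow v (k + 2),
      pow_add (-1 : ℝ) k 2]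
    ring
  rw [e, show exp v + exp (-v) - 2 = exp v + exp (-v) - ∑ i ∈ Finset.range 2,
    (v ^ i / (i.factorial : ℝ) + (-v) ^ i / (i.factorial : ℝ)) by
      simp [Finset.sum_range_succ]; ring]
  exact h

lemma good_cf : Good cf := by
  refine ⟨fun k => ?_, fun r => ?_⟩
  · rcases neg_one_pow_eq_or ℝ k with h | h <;> simp only [cf, h]
    · positivity
    · simp
  · by_cases hr : r = 0
    · subst hr
      refine summable_of_ne_finset_zero (s := {0}) fun k hk => ?_
      have : k ≠ 0 := by simpa using hk
      simp [this]
    · refine ((cf_hasSum r).summable.mul_right (r ^ 2)⁻¹).congr fun k => ?_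
      field_simp
      ring

lemma PwSum_cf {v : ℝ} (hv : v ≠ 0) : PwSum cf v * v ^ 2 = exp v + exp (-v) - 2 := by
  rw [PwSum, ← tsum_mul_right, ← (cf_hasSum v).tsum_eq]
  exact tsum_congr fun k => by ring

lemma iter_inv (c : ℝ) (n : ℕ) (t : ℝ) :
    iteratedDeriv n (fun t : ℝ => (c + t)⁻¹) t = (-1) ^ n * n.factorial * ((c + t) ^ (n + 1))⁻¹ := by
  rw [iteratedDeriv_comp_const_add n (fun z : ℝ => z⁻¹) c]
  show iteratedDeriv n (Inv.inv) (c + t) = _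
  rw [iteratedDeriv_eq_iterate, iter_deriv_inv]
  congr 1
  rw [← zpow_natCast, ← zpow_neg]
  congr 1
  push_cast; ring

lemma main_lt (x y : ℝ) (hxy : y < x) :
    (∀ t : ℝ, t ∈ Set.Ioi (-y) →
        0 ≤ ((x + t) - (y + t)) / (Real.log (x + t) - Real.log (y + t))) ∧
      ContDiffOn ℝ (⊤ : ℕ∞)
        (fun t : ℝ => ((x + t) - (y + t)) / (Real.log (x + t) - Real.log (y + t)))
        (Set.Ioi (-y)) ∧
      ∀ n : ℕ, ∀ t : ℝ, t ∈ Set.Ioi (-y) →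
        0 ≤ (-1 : ℝ) ^ n *
          iteratedDeriv n
            (deriv (fun t : ℝ =>
              ((x + t) - (y + t)) / (Real.log (x + t) - Real.log (y + t)))) t := by
  have py : ∀ t ∈ Set.Ioi (-y), 0 < y + t := fun t ht => by
    have : -y < t := ht
    linarith
  have px : ∀ t ∈ Set.Ioi (-y), 0 < x + t := fun t ht => by linarith [py t ht]
  have pv : ∀ t ∈ Set.Ioi (-y), 0 < log (x + t) - log (y + t) := fun t ht =>
    sub_pos.2 (log_lt_log (py t ht) (by linarith))
  have sv : ∀ n : WithTop ℕ∞, ∀ t ∈ Set.Ioi (-y),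
      ContDiffAt ℝ n (fun t => log (x + t) - log (y + t)) t := fun n t ht =>
    ((contDiffAt_const.add contDiffAt_id).log (px t ht).ne').sub
      ((contDiffAt_const.add contDiffAt_id).log (py t ht).ne')
  have sx : ∀ n : WithTop ℕ∞, ∀ t ∈ Set.Ioi (-y), ContDiffAt ℝ n (fun t => (x + t)⁻¹) t :=
    fun n t ht => (contDiffAt_const.add contDiffAt_id).inv (px t ht).ne'
  have sy : ∀ n : WithTop ℕ∞, ∀ t ∈ Set.Ioi (-y), ContDiffAt ℝ n (fun t => (y + t)⁻¹) t :=
    fun n t ht => (contDiffAt_const.add contDiffAt_id).inv (py t ht).ne'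
  have dv : ∀ t ∈ Set.Ioi (-y), HasDerivAt (fun t => log (x + t) - log (y + t))
      (-((y + t)⁻¹ - (x + t)⁻¹)) t := fun t ht => by
    have h1 := ((hasDerivAt_id t).const_add x).log (px t ht).ne'
    have h2 := ((hasDerivAt_id t).const_add y).log (py t ht).ne'
    refine (h1.sub h2).congr_deriv ?_
    simp
  refine ⟨fun t ht => div_nonneg (by linarith) (pv t ht).le, fun t ht => ?_, fun n t ht => ?_⟩
  · refine ContDiffAt.contDiffWithinAt ?_
    exact ((contDiffAt_const.add contDiffAt_id).sub (contDiffAt_const.add contDiffAt_id)).div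
      (sv _ t ht) (pv t ht).ne'
  · have e : deriv (fun t : ℝ =>
        ((x + t) - (y + t)) / (Real.log (x + t) - Real.log (y + t))) =ᶠ[nhds t]
        fun t => PwSum cf (log (x + t) - log (y + t)) := by
      filter_upwards [isOpen_Ioi.mem_nhds ht] with s hs
      have hv := pv s hs
      have hX := px s hs
      have hY := py s hs
      have h1 := (((hasDerivAt_id s).const_add x).sub ((hasDerivAt_id s).const_add y)).div
        (dv s hs) hv.ne'
      have h2 := PwSum_cf hv.ne'
      rw [neg_sub, exp_sub, exp_sub, exp_log hX, exp_log hY] at h2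
      refine h1.deriv.trans ?_
      rw [div_eq_iff (pow_ne_zero 2 hv.ne'), h2]
      simp only [id, Pi.sub_apply]
      field_simp
      ring
    rw [e.iteratedDeriv_eq]
    refine cm_comp (w := fun t => (y + t)⁻¹ - (x + t)⁻¹) isOpen_Ioi (fun t ht => (pv t ht).le) dv
      (fun n => sv n) (fun n t ht => (sy n t ht).sub (sx n t ht)) ?_ n good_cf t ht
    intro n t ht
    have := iteratedDeriv_sub (sy n t ht) (sx n t ht)
    change 0 ≤ (-1 : ℝ) ^ n * iteratedDeriv n ((fun t => (y + t)⁻¹) - (fun t => (x + t)⁻¹)) t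
    rw [this, iter_inv, iter_inv]
    have h1 : ((x + t) ^ (n + 1))⁻¹ ≤ ((y + t) ^ (n + 1))⁻¹ := by
      have := py t ht
      gcongr
    have h2 : (-1 : ℝ) ^ n * (-1) ^ n = 1 := by rw [← mul_pow]; simp
    have h3 : 0 ≤ (n.factorial : ℝ) * (((y + t) ^ (n + 1))⁻¹ - ((x + t) ^ (n + 1))⁻¹) :=
      mul_nonneg (Nat.cast_nonneg _) (sub_nonneg.2 h1)
    calc _ ≤ _ := h3
      _ = ((-1 : ℝ) ^ n * (-1) ^ n) * ((n.factorial : ℝ) *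
          (((y + t) ^ (n + 1))⁻¹ - ((x + t) ^ (n + 1))⁻¹)) := by rw [h2, one_mul]
      _ = _ := by ring

theorem logarithmic_mean_bernstein
    (x y : ℝ) (hx : 0 < x) (hy : 0 < y) (hxy : x ≠ y) :
    (∀ t : ℝ, t ∈ Set.Ioi (-(min x y)) →
        0 ≤ ((x + t) - (y + t)) / (Real.log (x + t) - Real.log (y + t))) ∧
      ContDiffOn ℝ (⊤ : ℕ∞)
        (fun t : ℝ => ((x + t) - (y + t)) / (Real.log (x + t) - Real.log (y + t)))
        (Set.Ioi (-(min x y))) ∧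
      ∀ n : ℕ, ∀ t : ℝ, t ∈ Set.Ioi (-(min x y)) →
        0 ≤ (-1 : ℝ) ^ n *
          iteratedDeriv n
            (deriv (fun t : ℝ =>
              ((x + t) - (y + t)) / (Real.log (x + t) - Real.log (y + t)))) t := by
  rcases lt_or_gt_of_ne hxy with h | h
  · rw [min_eq_left h.le]
    have e : ∀ t : ℝ, ((x + t) - (y + t)) / (Real.log (x + t) - Real.log (y + t)) =
        ((y + t) - (x + t)) / (Real.log (y + t) - Real.log (x + t)) := fun t => by
      rw [← neg_div_neg_eq, neg_sub, neg_sub]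
    simp only [e]
    exact main_lt y x h
  · rw [min_eq_right h.le]
    exact main_lt x y h
end

section
/- Let x > y > 0. Then the limit as t → ∞ of L_{x,y}(t) − t equals the arithmetic mean A(x,y) = (x+y)/2, where L_{x,y}(t) = (x − y)/(ln(x+t) − ln(y+t)). -/
open Real Filter

lemma aux_log (u : ℝ) (h0 : 0 < u) (h1 : u ≤ 1 / 2) :
    |Real.log (1 + u) - Real.log (1 - u) - 2 * u| ≤ 4 * u ^ 3 := by
  have hu : |u| < 1 := by rw [abs_of_pos h0]; linarith
  have hu' : |-u| < 1 := by rwa [abs_neg]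
  have a := Real.abs_log_sub_add_sum_range_le hu 2
  have b := Real.abs_log_sub_add_sum_range_le hu' 2
  have c : |u| ^ (2 + 1) / (1 - |u|) ≤ 2 * u ^ 3 := by
    rw [abs_of_pos h0, div_le_iff₀ (by linarith)]
    have : 0 < u ^ 3 := by positivity
    norm_num
    nlinarith
  rw [abs_neg] at b
  have a' := abs_le.1 (a.trans c)
  have b' := abs_le.1 (b.trans c)
  simp only [Finset.sum_range_succ, Finset.sum_range_zero, sub_neg_eq_add] at a' b'
  norm_num at a' b'
  rw [abs_le]
  constructor <;> linarith [a'.1, a'.2, b'.1, b'.2]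

theorem logarithmic_mean_limit
    (x y : ℝ) (hxy : x > y) (hy : 0 < y) :
    Tendsto (fun t : ℝ => (x - y) / (Real.log (x + t) - Real.log (y + t)) - t)
      atTop (nhds ((x + y) / 2)) := by
  have hD : 0 < x - y := by linarith
  rw [tendsto_iff_norm_sub_tendsto_zero]
  have hm : Tendsto (fun t : ℝ => (x - y) ^ 2 / (t + (x + y) / 2)) atTop (nhds 0) :=
    Tendsto.const_div_atTop (tendsto_atTop_add_const_right _ _ tendsto_id) _
  refine tendsto_of_tendsto_of_tendsto_of_le_of_le' tendsto_const_nhds hm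
    (Eventually.of_forall fun t => norm_nonneg _) ?_
  filter_upwards [eventually_ge_atTop (x - y)] with t ht
  set m := t + (x + y) / 2 with hmdef
  have hmpos : 0 < m := by rw [hmdef]; linarith
  obtain ⟨u, hu⟩ : ∃ u, u = (x - y) / (2 * m) := ⟨_, rfl⟩
  have h0 : 0 < u := by rw [hu]; positivity
  have h1 : u ≤ 1 / 2 := by
    rw [hu, div_le_iff₀ (by positivity)]; linarith
  have hum : x - y = 2 * m * u := by rw [hu]; field_simp
  have e : Real.log (x + t) - Real.log (y + t) = Real.log (1 + u) - Real.log (1 - u) := by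
    have e1 : x + t = m * (1 + u) := by linarith
    have e2 : y + t = m * (1 - u) := by linarith
    rw [e1, e2, Real.log_mul hmpos.ne' (by linarith), Real.log_mul hmpos.ne' (by linarith)]
    ring
  have k := aux_log u h0 h1
  rw [e]
  set l := Real.log (1 + u) - Real.log (1 - u)
  have hl : u ≤ l := by
    have := (abs_le.1 k).1
    nlinarith [mul_pos h0 h0]
  have hl0 : 0 < l := by linarith
  have e3 : (x - y) / l - t - (x + y) / 2 = -(m * (l - 2 * u) / l) := by
    have : t = m - (x + y) / 2 := by rw [hmdef]; ring
    rw [this, hum]; field_simp; ring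
  rw [e3, Real.norm_eq_abs, abs_neg, abs_div, abs_mul, abs_of_pos hmpos, abs_of_pos hl0,
    div_le_iff₀ hl0, hum]
  have e4 : (2 * m * u) ^ 2 / m = 4 * m * u ^ 2 := by field_simp; ring
  rw [e4]
  calc m * |l - 2 * u| ≤ m * (4 * u ^ 3) := by gcongr
    _ = 4 * m * u ^ 2 * u := by ring
    _ ≤ _ := by gcongr
end

section
/- Let x > y > 0. Then the difference between the arithmetic and logarithmic means satisfies A(x,y) − L(x,y) = ((x−y)/π) · ∫₀^∞ (P_{x,y}(s)/s) · e^{−sy} ds, where A(x,y) = (x+y)/2, L(x,y) = (x−y)/(ln x − ln y), P_{x,y}(s) = ∫₀¹ sin(λπ) · F(λ, (x−y)s) dλ, and F(λ,s) = ∫₀¹ (1/u − 1)^λ (1 − λ/(1−u)) e^{−us} du. -/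
open Real MeasureTheory

/-- The function `P_{x,y}(s)` from the paper. -/
noncomputable def paperP (x y s : ℝ) : ℝ :=
  ∫ lam in (0 : ℝ)..1, Real.sin (lam * π) * paperF lam ((x - y) * s)


open Set

lemma aux_beta_s18 (p q : ℝ) (hp : 0 < p) (hq : 0 < q) :
    IntegrableOn (fun u : ℝ => u ^ (p - 1) * (1 - u) ^ (q - 1)) (Ioo 0 1) ∧
    ∫ u in Ioo (0 : ℝ) 1, u ^ (p - 1) * (1 - u) ^ (q - 1)
      = Real.Gamma p * Real.Gamma q / Real.Gamma (p + q) := by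
  have hc := Complex.betaIntegral_convergent (u := (p : ℂ)) (v := (q : ℂ)) (by simpa) (by simpa)
  rw [intervalIntegrable_iff_integrableOn_Ioo_of_le zero_le_one] at hc
  have he : ∀ u ∈ Ioo (0 : ℝ) 1, (u : ℂ) ^ ((p : ℂ) - 1) * (1 - (u : ℂ)) ^ ((q : ℂ) - 1)
      = ((u ^ (p - 1) * (1 - u) ^ (q - 1) : ℝ) : ℂ) := by
    intro u hu
    push_cast
    rw [Complex.ofReal_cpow hu.1.le, Complex.ofReal_cpow (by linarith [hu.2])]
    push_cast
    rfl
  have hc2 : IntegrableOn (fun u : ℝ => ((u ^ (p - 1) * (1 - u) ^ (q - 1) : ℝ) : ℂ)) (Ioo 0 1) :=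
    hc.congr_fun he measurableSet_Ioo
  refine ⟨by simpa [IntegrableOn] using hc2.re, ?_⟩
  have hb := ProbabilityTheory.beta_eq_betaIntegralReal p q hp hq
  rw [ProbabilityTheory.beta] at hb
  rw [hb, Complex.betaIntegral, intervalIntegral.integral_of_le zero_le_one,
    integral_Ioc_eq_integral_Ioo, setIntegral_congr_fun measurableSet_Ioo he, integral_complex_ofReal, Complex.ofReal_re]

/-- kernel -/
noncomputable def auxK (l u : ℝ) : ℝ := u ^ (-l) * (1 - u) ^ (l - 1)

lemma aux_K (l : ℝ) (h0 : 0 < l) (h1 : l < 1) :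
    IntegrableOn (auxK l) (Ioo 0 1) ∧ ∫ u in Ioo (0 : ℝ) 1, auxK l u = π / Real.sin (l * π) := by
  have h := aux_beta_s18 (1 - l) l (by linarith) h0
  have e : (1 - l - 1) = -l := by ring
  rw [e] at h
  refine ⟨h.1, h.2.trans ?_⟩
  have := Real.Gamma_mul_Gamma_one_sub l
  rw [sub_add_cancel, Real.Gamma_one, div_one, mul_comm, this, mul_comm π l]

lemma aux_uK (l : ℝ) (h0 : 0 < l) (h1 : l < 1) :
    IntegrableOn (fun u => u * auxK l u) (Ioo 0 1) ∧
      ∫ u in Ioo (0 : ℝ) 1, u * auxK l u = (1 - l) * (π / Real.sin (l * π)) := by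
  have h := aux_beta_s18 (2 - l) l (by linarith) h0
  have he : ∀ u ∈ Ioo (0 : ℝ) 1, u ^ (2 - l - 1) * (1 - u) ^ (l - 1) = u * auxK l u := by
    intro u hu
    rw [auxK, show 2 - l - 1 = 1 + (-l) by ring, Real.rpow_add hu.1, Real.rpow_one]
    ring
  refine ⟨h.1.congr_fun he measurableSet_Ioo, ?_⟩
  rw [← setIntegral_congr_fun measurableSet_Ioo he, h.2]
  have := Real.Gamma_mul_Gamma_one_sub l
  rw [mul_comm l π, ← this, sub_add_cancel, show 2 - l = (1 - l) + 1 by ring,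
    Real.Gamma_add_one (by linarith), Real.Gamma_two]
  ring

lemma aux_J (x y l : ℝ) (hxy : y < x) (hy : 0 < y) (h0 : 0 < l) (h1 : l < 1) :
    ∫ u in Ioo (0 : ℝ) 1, auxK l u / (y + u * (x - y))
      = π / Real.sin (l * π) * (x ^ (l - 1) * y ^ (-l)) := by
  have hx : 0 < x := hy.trans hxy
  have ha : 0 < x - y := by linarith
  have hD : ∀ u ∈ Ioo (0 : ℝ) 1, 0 < y + u * (x - y) := fun u hu => by
    have := mul_pos hu.1 ha
    linarith
  set f : ℝ → ℝ := fun u => u * x / (y + u * (x - y)) with hf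
  have himg : f '' Ioo 0 1 = Ioo 0 1 := by
    ext v
    constructor
    · rintro ⟨u, hu, rfl⟩
      have := hD u hu
      refine ⟨div_pos (mul_pos hu.1 hx) this, ?_⟩
      rw [hf]
      simp only
      rw [div_lt_one this]
      nlinarith [hu.2]
    · intro hv
      have hE : 0 < x - v * (x - y) := by nlinarith [hv.2]
      refine ⟨v * y / (x - v * (x - y)), ⟨div_pos (mul_pos hv.1 hy) hE, ?_⟩, ?_⟩
      · rw [div_lt_one hE]; nlinarith [hv.2]
      · simp only [hf]
        have : y + v * y / (x - v * (x - y)) * (x - y) = y * x / (x - v * (x - y)) := by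
          field_simp; ring
        rw [this]
        field_simp
  have hder : ∀ u ∈ Ioo (0 : ℝ) 1,
      HasDerivWithinAt f (x * y / (y + u * (x - y)) ^ 2) (Ioo 0 1) u := by
    intro u hu
    have h := ((hasDerivAt_id u).mul_const x).div
      (((hasDerivAt_id u).mul_const (x - y)).const_add y) (hD u hu).ne'
    refine (h.congr_deriv ?_).hasDerivWithinAt
    simp only [id]
    congr 1
    ring
  have hinj : InjOn f (Ioo 0 1) := by
    intro u hu v hv h
    simp only [hf] at h
    rw [div_eq_div_iff (hD u hu).ne' (hD v hv).ne'] at h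
    have : (u - v) * (x * y) = 0 := by linear_combination h
    rcases mul_eq_zero.1 this with h | h
    · linarith
    · exact absurd h (by positivity)
  have hcv := integral_image_eq_integral_abs_deriv_smul measurableSet_Ioo hder hinj (auxK l)
  rw [himg, (aux_K l h0 h1).2] at hcv
  rw [hcv]
  rw [← integral_mul_const]
  refine setIntegral_congr_fun measurableSet_Ioo fun u hu => ?_
  have hd := hD u hu
  have hu1 : 0 < 1 - u := by linarith [hu.2]
  have e1 : 1 - f u = y * (1 - u) / (y + u * (x - y)) := by
    simp only [hf]; field_simp; ring
  simp only [smul_eq_mul]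
  rw [abs_of_pos (by positivity), auxK, auxK, e1]
  simp only [hf]
  have hu0 := hu.1
  rw [Real.div_rpow (by positivity) hd.le, Real.div_rpow (by positivity) hd.le,
    Real.mul_rpow hu0.le hx.le, Real.mul_rpow hy.le hu1.le]
  set D := y + u * (x - y)
  have k1 : ∀ z : ℝ, 0 < z → z ^ (l - 1) = z ^ l / z := fun z hz => Real.rpow_sub_one hz.ne' l
  have k2 : ∀ z : ℝ, 0 < z → z ^ (-l) = (z ^ l)⁻¹ := fun z hz => Real.rpow_neg hz.le l
  rw [k1 x hx, k1 y hy, k1 D hd, k2 x hx, k2 y hy, k2 D hd]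
  have := Real.rpow_pos_of_pos hx l
  have := Real.rpow_pos_of_pos hy l
  have := Real.rpow_pos_of_pos hd l
  field_simp

/-- the primitive -/
noncomputable def auxH (l u : ℝ) : ℝ := u ^ (1 - l) * (1 - u) ^ l

lemma auxH_eq (l u : ℝ) (hu : u ∈ Ioo (0 : ℝ) 1) : auxH l u = u * (1 - u) * auxK l u := by
  have hu1 : 0 < 1 - u := by linarith [hu.2]
  have hu0 := hu.1
  rw [auxH, auxK, Real.rpow_sub_one hu1.ne', Real.rpow_sub hu0, Real.rpow_one, Real.rpow_neg hu0.le]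
  field_simp

lemma aux_HD (x y l : ℝ) (hxy : y < x) (hy : 0 < y) (h0 : 0 < l) (h1 : l < 1) :
    ∫ u in Ioo (0 : ℝ) 1, auxH l u / (y + u * (x - y))
      = π / Real.sin (l * π) * ((l * x + (1 - l) * y - x ^ l * y ^ (1 - l)) / (x - y) ^ 2) := by
  have hx : 0 < x := hy.trans hxy
  have ha : 0 < x - y := by linarith
  have hD : ∀ u ∈ Ioo (0 : ℝ) 1, 0 < y + u * (x - y) := fun u hu => by
    have := mul_pos hu.1 ha
    linarith
  have hKi := (aux_K l h0 h1).1
  have huKi := (aux_uK l h0 h1).1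
  have hJi : IntegrableOn (fun u => auxK l u / (y + u * (x - y))) (Ioo 0 1) := by
    refine Integrable.mono' (hKi.norm.const_mul (1 / y)) ?_ ?_
    · refine Measurable.aestronglyMeasurable ?_
      unfold auxK
      fun_prop
    · refine (ae_restrict_iff' measurableSet_Ioo).2 (Filter.Eventually.of_forall fun u hu => ?_)
      rw [norm_div, Real.norm_of_nonneg (hD u hu).le, div_eq_mul_one_div, mul_comm]
      gcongr
      have := mul_pos hu.1 ha
      linarith
  have he : ∀ u ∈ Ioo (0 : ℝ) 1, auxH l u / (y + u * (x - y)) =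
      x / (x - y) ^ 2 * auxK l u - 1 / (x - y) * (u * auxK l u)
        - x * y / (x - y) ^ 2 * (auxK l u / (y + u * (x - y))) := by
    intro u hu
    rw [auxH_eq l u hu]
    have := hD u hu
    field_simp
    ring
  rw [setIntegral_congr_fun measurableSet_Ioo he, integral_sub, integral_sub, integral_const_mul,
    integral_const_mul, integral_const_mul, (aux_K l h0 h1).2, (aux_uK l h0 h1).2,
    aux_J x y l hxy hy h0 h1]
  · rw [Real.rpow_sub_one hx.ne', Real.rpow_sub hy, Real.rpow_one, Real.rpow_neg hy.le]
    have := Real.rpow_pos_of_pos hy l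
    field_simp
    ring
  · exact hKi.const_mul _
  · exact huKi.const_mul _
  · exact (hKi.const_mul _).sub (huKi.const_mul _)
  · exact hJi.const_mul _

lemma aux_F (l s : ℝ) (h0 : 0 < l) (h1 : l < 1) :
    paperF l s = s * ∫ u in Ioo (0 : ℝ) 1, auxH l u * Real.exp (-u * s) := by
  have hder : ∀ u ∈ Ioo (0 : ℝ) 1,
      HasDerivAt (auxH l) ((1 / u - 1) ^ l * (1 - l / (1 - u))) u := by
    intro u hu
    have hu0 := hu.1
    have hu1 : 0 < 1 - u := by linarith [hu.2]
    have h := ((hasDerivAt_id u).rpow_const (p := 1 - l) (Or.inl hu0.ne')).mul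
      (((hasDerivAt_id u).const_sub 1).rpow_const (p := l) (Or.inl hu1.ne'))
    refine h.congr_deriv ?_
    simp only [id]
    rw [show 1 / u - 1 = (1 - u) / u by field_simp, Real.div_rpow hu1.le hu0.le,
      Real.rpow_sub_one hu1.ne', show 1 - l - 1 = -l by ring, Real.rpow_neg hu0.le,
      Real.rpow_sub hu0, Real.rpow_one]
    have := Real.rpow_pos_of_pos hu0 l
    field_simp
    ring
  have hint : IntervalIntegrable (fun u : ℝ => (1 / u - 1) ^ l * (1 - l / (1 - u))) volume 0 1 := by
    rw [intervalIntegrable_iff_integrableOn_Ioo_of_le zero_le_one]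
    refine IntegrableOn.congr_fun
      (((aux_K l h0 h1).1.const_mul (1 - l)).sub (aux_uK l h0 h1).1) ?_ measurableSet_Ioo
    intro u hu
    have hu0 := hu.1
    have hu1 : 0 < 1 - u := by linarith [hu.2]
    simp only [Pi.sub_apply]
    rw [show 1 / u - 1 = (1 - u) / u by field_simp, Real.div_rpow hu1.le hu0.le, auxK,
      Real.rpow_sub_one hu1.ne', Real.rpow_neg hu0.le]
    have := Real.rpow_pos_of_pos hu0 l
    field_simp
    ring
  have hcont : Continuous (auxH l) := by
    unfold auxH
    refine (Real.continuous_rpow_const (by linarith)).mul ?_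
    exact (continuous_const.sub continuous_id).rpow_const (fun _ => Or.inr h0.le)
  have hib := intervalIntegral.integral_mul_deriv_eq_deriv_mul_of_hasDerivAt
    (a := 0) (b := 1) (u := fun u => Real.exp (-u * s)) (u' := fun u => -s * Real.exp (-u * s))
    (v := auxH l) (v' := fun u : ℝ => (1 / u - 1) ^ l * (1 - l / (1 - u)))
    (by fun_prop) hcont.continuousOn
    (fun u _ => by
      have := (((hasDerivAt_id u).neg).mul_const s).exp
      refine this.congr_deriv ?_
      simp; ring)
    (fun u hu => hder u (by simpa using hu))
    (Continuous.intervalIntegrable (by fun_prop) _ _) hint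
  have e0 : auxH l 0 = 0 := by simp [auxH, Real.zero_rpow (by linarith : 1 - l ≠ 0)]
  have e1 : auxH l 1 = 0 := by simp [auxH, Real.zero_rpow h0.ne']
  rw [e0, e1] at hib
  rw [paperF, ← integral_Ioc_eq_integral_Ioo, ← intervalIntegral.integral_of_le zero_le_one,
    ← intervalIntegral.integral_const_mul]
  calc _ = ∫ u in (0:ℝ)..1, Real.exp (-u * s) * ((1 / u - 1) ^ l * (1 - l / (1 - u))) := by
        congr 1; ext u; ring
    _ = _ := by
        rw [hib, mul_zero, mul_zero, sub_zero, zero_sub, ← intervalIntegral.integral_neg]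
        congr 1; ext u; ring

lemma aux_L (x y : ℝ) (hxy : y < x) (hy : 0 < y) :
    ∫ l in Ioo (0 : ℝ) 1, (l * x + (1 - l) * y - x ^ l * y ^ (1 - l))
      = (x + y) / 2 - (x - y) / (Real.log x - Real.log y) := by
  have hx : 0 < x := hy.trans hxy
  have hl : Real.log x - Real.log y ≠ 0 := (sub_pos.2 (Real.log_lt_log hy hxy)).ne'
  rw [← integral_Ioc_eq_integral_Ioo, ← intervalIntegral.integral_of_le zero_le_one]
  have hc : Continuous fun l : ℝ => x ^ l * y ^ (1 - l) := by
    refine (Real.continuous_const_rpow hx.ne').mul ?_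
    exact (Real.continuous_const_rpow hy.ne').comp (continuous_const.sub continuous_id)
  rw [intervalIntegral.integral_eq_sub_of_hasDerivAt
    (f := fun l => l ^ 2 / 2 * x + (l - l ^ 2 / 2) * y
      - x ^ l * y ^ (1 - l) / (Real.log x - Real.log y))]
  · simp
    field_simp
    ring
  · intro l _
    have h1 := ((hasDerivAt_id l).pow 2).div_const 2
    have h2 : HasDerivAt (fun l : ℝ => x ^ l) (x ^ l * Real.log x) l := by
      simpa [mul_comm] using (hasDerivAt_id l).const_rpow hx
    have h3 : HasDerivAt (fun l : ℝ => y ^ (1 - l)) (- (y ^ (1 - l) * Real.log y)) l := by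
      simpa [mul_comm] using ((hasDerivAt_id l).const_sub 1).const_rpow hy
    have h := ((h1.mul_const x).add (((hasDerivAt_id l).sub h1).mul_const y)).sub
      ((h2.mul h3).div_const (Real.log x - Real.log y))
    refine h.congr_deriv ?_
    simp
    field_simp
    ring
  · exact Continuous.intervalIntegrable (by fun_prop) _ _

lemma auxH_bound (l u : ℝ) (hl : l ∈ Ioo (0 : ℝ) 1) (hu : u ∈ Ioo (0 : ℝ) 1) :
    0 ≤ auxH l u ∧ auxH l u ≤ 1 := by
  have hu0 := hu.1
  have hu1 : 0 < 1 - u := by linarith [hu.2]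
  unfold auxH
  refine ⟨by positivity, ?_⟩
  have a1 : u ^ (1 - l) ≤ 1 := Real.rpow_le_one hu0.le hu.2.le (by linarith [hl.2])
  have a2 : (1 - u) ^ l ≤ 1 := Real.rpow_le_one hu1.le (by linarith) hl.1.le
  exact mul_le_one₀ a1 (by positivity) a2

theorem arithmetic_minus_logarithmic_integral_representation
    (x y : ℝ) (hxy : x > y) (hy : 0 < y) :
    (x + y) / 2 - (x - y) / (Real.log x - Real.log y) =
      (x - y) / π *
        ∫ s in Set.Ioi (0 : ℝ), paperP x y s / s * Real.exp (-s * y) := by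
  have hx : 0 < x := hy.trans hxy
  have ha : 0 < x - y := by linarith
  set a := x - y with hadef
  set μ : Measure ℝ := volume.restrict (Ioo 0 1) with hμ
  set ν : Measure ℝ := volume.restrict (Ioi 0) with hν
  have : IsFiniteMeasure μ := by rw [hμ]; infer_instance
  set G : ℝ → ℝ × ℝ → ℝ := fun s p =>
    Real.sin (p.1 * π) * a * auxH p.1 p.2 * Real.exp (-(y + p.2 * a) * s) with hG
  have hsin : ∀ l ∈ Ioo (0 : ℝ) 1, 0 < Real.sin (l * π) := fun l hl =>
    Real.sin_pos_of_pos_of_lt_pi (mul_pos hl.1 Real.pi_pos) (by nlinarith [hl.2, Real.pi_pos])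
  have hmem : ∀ᵐ p ∂(μ.prod μ), p.1 ∈ Ioo (0 : ℝ) 1 ∧ p.2 ∈ Ioo (0 : ℝ) 1 := by
    rw [hμ, Measure.prod_restrict]
    exact ae_restrict_mem (measurableSet_Ioo.prod measurableSet_Ioo)
  have hGm : Measurable (Function.uncurry G) := by
    rw [hG]
    unfold auxH Function.uncurry
    fun_prop
  have hGi : Integrable (Function.uncurry G) (ν.prod (μ.prod μ)) := by
    have hexp : Integrable (fun s => a * Real.exp (-y * s)) ν :=
      (integrableOn_exp_mul_Ioi (by linarith : -y < 0) 0).const_mul a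
    refine Integrable.mono' (hexp.mul_prod (integrable_const (1 : ℝ) (μ := μ.prod μ)))
      hGm.aestronglyMeasurable ?_
    have hm : ∀ᵐ z ∂(ν.prod (μ.prod μ)), z.1 ∈ Ioi (0 : ℝ) ∧
        (z.2.1 ∈ Ioo (0 : ℝ) 1 ∧ z.2.2 ∈ Ioo (0 : ℝ) 1) := by
      rw [hμ, hν, Measure.prod_restrict, Measure.prod_restrict]
      exact ae_restrict_mem
        (measurableSet_Ioi.prod (measurableSet_Ioo.prod measurableSet_Ioo))
    filter_upwards [hm] with z hz
    obtain ⟨hz1, hz2, hz3⟩ := hz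
    obtain ⟨b0, b1⟩ := auxH_bound _ _ hz2 hz3
    have hs := hsin _ hz2
    simp only [Function.uncurry, hG]
    rw [Real.norm_of_nonneg (by positivity), mul_one]
    have c1 : Real.sin (z.2.1 * π) * a * auxH z.2.1 z.2.2 ≤ 1 * a * 1 := by
      gcongr
      exact Real.sin_le_one _
    have c2 : Real.exp (-(y + z.2.2 * a) * z.1) ≤ Real.exp (-y * z.1) := by
      apply Real.exp_le_exp.2
      have : 0 < z.2.2 * a * z.1 := mul_pos (mul_pos hz3.1 ha) hz1
      nlinarith
    calc _ ≤ (1 * a * 1) * Real.exp (-y * z.1) := by gcongr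
      _ = _ := by ring
  have hP : ∀ᵐ s ∂ν, paperP x y s / s * Real.exp (-s * y) = ∫ p, G s p ∂(μ.prod μ) := by
    filter_upwards [hGi.prod_right_ae, ae_restrict_mem measurableSet_Ioi] with s hs hs0
    have hs0' : (0 : ℝ) < s := hs0
    have hs' : Integrable (G s) (μ.prod μ) := hs
    rw [integral_prod _ hs', paperP, intervalIntegral.integral_of_le zero_le_one,
      integral_Ioc_eq_integral_Ioo, div_mul_eq_mul_div, ← integral_mul_const,
      ← integral_div]
    refine setIntegral_congr_fun measurableSet_Ioo fun l hl => ?_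
    rw [aux_F l _ hl.1 hl.2]
    have : ∀ u : ℝ, G s (l, u) = (Real.sin (l * π) * a * Real.exp (-s * y)) *
        (auxH l u * Real.exp (-u * (a * s))) := by
      intro u
      simp only [hG]
      rw [show -(y + u * a) * s = -s * y + -u * (a * s) by ring, Real.exp_add]
      ring
    simp only [this]
    rw [integral_const_mul, ← hadef]
    generalize (∫ u, auxH l u * Real.exp (-u * (a * s)) ∂μ) = I
    field_simp
  rw [integral_congr_ae hP, integral_integral_swap hGi]
  have hin : ∀ᵐ p ∂(μ.prod μ), ∫ s, G s p ∂ν =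
      Real.sin (p.1 * π) * a * (auxH p.1 p.2 / (y + p.2 * a)) := by
    filter_upwards [hmem] with p hp
    have hd : 0 < y + p.2 * a := by have := mul_pos hp.2.1 ha; linarith
    simp only [hG]
    rw [integral_const_mul, hν, integral_exp_mul_Ioi (by linarith) 0]
    rw [mul_zero, Real.exp_zero, neg_div_neg_eq]
    ring
  have hint2 := hGi.integral_prod_right
  have hint3 := (integrable_congr hin).1 hint2
  rw [integral_congr_ae hin, integral_prod _ hint3, ← aux_L x y hxy hy]
  have hfin : ∀ l ∈ Ioo (0 : ℝ) 1, (∫ u, Real.sin (l * π) * a * (auxH l u / (y + u * a)) ∂μ)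
      = π / a * (l * x + (1 - l) * y - x ^ l * y ^ (1 - l)) := by
    intro l hl
    rw [integral_const_mul, hμ, aux_HD x y l hxy hy hl.1 hl.2, ← hadef]
    have := hsin l hl
    field_simp
  simp only
  rw [setIntegral_congr_fun measurableSet_Ioo hfin, integral_const_mul]
  have := Real.pi_pos
  rw [← mul_assoc, show a / π * (π / a) = 1 by field_simp, one_mul]
end
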